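/- arXiv:1702.06420 — 9 statements merged into one kernel-verified Lean document; each statement's English description precedes it below -/
import Mathlib

section
/- For every integer p ≥ 0, the exponential generating function of the p-Bernoulli numbers satisfies: there exists ε > 0 such that for every real number t with 0 < t < ε, the series Σ_{n=0}^∞ B_{n,p} t^n/n! converges and equals (p+1)(t − H_p)e^{pt}/(e^t − 1)^{p+1} + (p+1) Σ_{k=1}^{p} C(p,k) H_k/(e^t − 1)^{k+1}. -/
/-- Stirling numbers of the second kind. -/
def stirling2 (n k : ℕ) : ℚ :=
  (1 / (Nat.factorial k : ℚ)) *
    ∑ j ∈ Finset.range (k + 1), (-1 : ℚ) ^ (k - j) * (Nat.choose k j : ℚ) * (j : ℚ) ^ n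

/-- The `p`-Bernoulli numbers. -/
def pBernoulli (n p : ℕ) : ℚ :=
  ∑ k ∈ Finset.range (n + 1),
    (-1 : ℚ) ^ k * stirling2 n k * ((Nat.choose (k + p + 1) k : ℚ))⁻¹ * (Nat.factorial k : ℚ)

/-- Harmonic numbers. -/
def harmonic' (n : ℕ) : ℚ := ∑ j ∈ Finset.Icc 1 n, (1 : ℚ) / (j : ℚ)

theorem hs_cong {f g : ℕ → ℝ} {a b : ℝ} (h : HasSum f a) (hf : ∀ k, g k = f k) (hb : b = a) :
    HasSum g b := by
  obtain rfl : g = f := funext hf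
  rw [hb]; exact h

noncomputable def AA (n k : ℕ) : ℝ :=
  ∑ j ∈ Finset.range (k + 1), (-1 : ℝ) ^ (k + j) * (Nat.choose k j : ℝ) * (j : ℝ) ^ n

theorem AA_ext (n k : ℕ) : AA n k =
    ∑ j ∈ Finset.range (k + 2), (-1 : ℝ) ^ (k + j) * (Nat.choose k j : ℝ) * (j : ℝ) ^ n := by
  rw [Finset.sum_range_succ _ (k + 1)]
  simp [AA]

theorem AA_rec (n k : ℕ) : AA (n + 1) (k + 1) = (k + 1) * (AA n (k + 1) + AA n k) := by
  rw [AA_ext n k]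
  unfold AA
  rw [← Finset.sum_add_distrib, Finset.mul_sum]
  refine Finset.sum_congr rfl fun j _ => ?_
  rcases j with _ | j
  · have e : (-1 : ℝ) ^ (k + 1) = -(-1) ^ k := by ring
    simp [e]
  · have h1 : ((k + 1 : ℕ) : ℝ) * (k.choose j : ℝ) = ((k + 1).choose (j + 1) : ℝ) * ((j + 1 : ℕ) : ℝ) := by
      exact_mod_cast Nat.add_one_mul_choose_eq k j
    have h2 : ((k + 1).choose (j + 1) : ℝ) = k.choose j + k.choose (j + 1) := by
      exact_mod_cast Nat.choose_succ_succ k j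
    have h3 : (k.choose (j + 1) : ℝ) = (k + 1).choose (j + 1) - k.choose j := by linarith
    rw [h3]
    push_cast at h1 ⊢
    have e : (-1 : ℝ) ^ (k + 1 + (j + 1)) = - (-1 : ℝ) ^ (k + (j + 1)) := by ring
    rw [e]
    linear_combination ((-1 : ℝ) ^ (k + (j + 1)) * ((j : ℝ) + 1) ^ n) * h1

theorem AA_zero (k : ℕ) : AA 0 (k + 1) = 0 := by
  have h := add_pow (1 : ℝ) (-1) (k + 1)
  have h2 : AA 0 (k + 1) = (-1) ^ (k + 1) * (1 + -1 : ℝ) ^ (k + 1) := by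
    rw [add_comm (1 : ℝ), add_pow, Finset.mul_sum]
    refine Finset.sum_congr rfl fun j _ => ?_
    rw [pow_add]; simp; ring
  rw [h2]; simp

theorem AA_nonneg (n : ℕ) : ∀ k, 0 ≤ AA n k := by
  induction n with
  | zero =>
    rintro (_ | k)
    · simp [AA]
    · rw [AA_zero]
  | succ n ih =>
    rintro (_ | k)
    · simp [AA]
    · rw [AA_rec]
      have := ih k
      have := ih (k + 1)
      positivity

theorem AA_vanish (n : ℕ) : ∀ k, n < k → AA n k = 0 := by
  induction n with
  | zero =>
    rintro (_ | k) h
    · omega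
    · rw [AA_zero]
  | succ n ih =>
    rintro (_ | k) h
    · omega
    · rw [AA_rec, ih k (by omega), ih (k + 1) (by omega)]; simp

theorem AA_hasSum (k : ℕ) (t : ℝ) :
    HasSum (fun n : ℕ => AA n k * (t ^ n / (n.factorial : ℝ))) ((Real.exp t - 1) ^ k) := by
  have h : ∀ j : ℕ, HasSum (fun n : ℕ => (-1 : ℝ) ^ (k + j) * (Nat.choose k j : ℝ) *
      ((j * t) ^ n / (n.factorial : ℝ))) ((-1 : ℝ) ^ (k + j) * (Nat.choose k j : ℝ) * Real.exp (j * t)) := by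
    intro j
    refine HasSum.mul_left _ ?_
    rw [Real.exp_eq_exp_ℝ]
    exact NormedSpace.expSeries_div_hasSum_exp _
  have h2 := hasSum_sum (s := Finset.range (k + 1)) fun j _ => h j
  convert h2 using 1
  · funext n
    rw [AA, Finset.sum_mul]
    refine Finset.sum_congr rfl fun j _ => ?_
    rw [mul_pow]; ring
  · rw [sub_eq_add_neg, add_pow]
    refine Finset.sum_congr rfl fun j hj => ?_
    have hj : j ≤ k := by simpa [Nat.lt_succ_iff] using hj
    rw [Real.exp_nat_mul]
    have : (-1 : ℝ) ^ (k - j) = (-1) ^ (k + j) := by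
      obtain ⟨d, rfl⟩ := Nat.exists_eq_add_of_le hj
      rw [Nat.add_sub_cancel_left, show j + d + j = d + 2 * j by ring, pow_add, pow_mul]; simp
    rw [this]; ring

theorem stirling2_AA (n k : ℕ) : (stirling2 n k : ℝ) * (k.factorial : ℝ) = AA n k := by
  unfold stirling2 AA
  push_cast
  have : (k.factorial : ℝ) ≠ 0 := by positivity
  rw [mul_right_comm, one_div_mul_cancel this, one_mul]
  refine Finset.sum_congr rfl fun j hj => ?_
  have hj : j ≤ k := by simpa [Nat.lt_succ_iff] using hj
  have : (-1 : ℝ) ^ (k - j) = (-1) ^ (k + j) := by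
    obtain ⟨d, rfl⟩ := Nat.exists_eq_add_of_le hj
    rw [Nat.add_sub_cancel_left, show j + d + j = d + 2 * j by ring, pow_add, pow_mul]; simp
  rw [this]

noncomputable def aa (p k : ℕ) : ℝ :=
  (k.factorial : ℝ) * (p.factorial : ℝ) / ((k + p + 1).factorial : ℝ)

theorem choose_aa (p k : ℕ) : ((Nat.choose (k + p + 1) k : ℝ))⁻¹ = (p + 1) * aa p k := by
  rw [Nat.cast_choose ℝ (by omega : k ≤ k + p + 1), show k + p + 1 - k = p + 1 by omega, aa,
    Nat.factorial_succ p, inv_div]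
  push_cast
  ring

theorem aa_rec (p k : ℕ) : aa (p + 1) k = aa p k - aa p (k + 1) := by
  unfold aa
  rw [show k + (p + 1) + 1 = k + p + 1 + 1 by ring, show k + 1 + p + 1 = k + p + 1 + 1 by ring,
    Nat.factorial_succ (k + p + 1), Nat.factorial_succ p, Nat.factorial_succ k]
  have : ((k + p + 1).factorial : ℝ) ≠ 0 := by positivity
  have : ((k : ℝ) + p + 1 + 1) ≠ 0 := by positivity
  push_cast
  field_simp
  ring

theorem aa_zero (p : ℕ) : aa p 0 = 1 / (p + 1) := by
  unfold aa
  rw [zero_add, Nat.factorial_succ p]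
  have : (p.factorial : ℝ) ≠ 0 := by positivity
  push_cast
  field_simp
  simp

noncomputable def hh (p : ℕ) (z : ℝ) : ℝ :=
  ∑ k ∈ Finset.range (p + 1), (Nat.choose p k : ℝ) * (harmonic' k : ℝ) * z ^ (k + 1)

theorem harm_succ (k : ℕ) : (harmonic' (k + 1) : ℝ) = harmonic' k + 1 / (k + 1) := by
  unfold harmonic'
  rw [Finset.sum_Icc_succ_top (by omega)]
  push_cast; ring

theorem hh_ext (p : ℕ) (z : ℝ) : hh p z =
    ∑ k ∈ Finset.range (p + 2), (Nat.choose p k : ℝ) * (harmonic' k : ℝ) * z ^ (k + 1) := by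
  rw [Finset.sum_range_succ _ (p + 1)]
  simp [hh]

theorem harm_zero : (harmonic' 0 : ℝ) = 0 := by simp [harmonic']

theorem hh_rec (p : ℕ) (z : ℝ) :
    hh (p + 1) z = (1 + z) * hh p z + (z * (1 + z) ^ (p + 1) - z) / (p + 1) := by
  have e : (1 + z) ^ (p + 1) - 1 =
      ∑ k ∈ Finset.range (p + 1), z ^ (k + 1) * ((p + 1).choose (k + 1) : ℝ) := by
    rw [add_comm, add_pow, Finset.sum_range_succ']
    simp
  have e2 : (z * (1 + z) ^ (p + 1) - z) / (p + 1) =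
      ∑ k ∈ Finset.range (p + 1), z ^ (k + 2) * (p.choose k : ℝ) / (k + 1) := by
    rw [show z * (1 + z) ^ (p + 1) - z = z * ((1 + z) ^ (p + 1) - 1) by ring, e, Finset.mul_sum,
      Finset.sum_div]
    refine Finset.sum_congr rfl fun j _ => ?_
    have h1 : ((p + 1 : ℕ) : ℝ) * (p.choose j : ℝ) = ((p + 1).choose (j + 1) : ℝ) * ((j + 1 : ℕ) : ℝ) := by
      exact_mod_cast Nat.add_one_mul_choose_eq p j
    push_cast at h1
    rw [div_eq_div_iff (by positivity) (by positivity)]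
    linear_combination (-z ^ (j + 2)) * h1
  have e3 : (1 + z) * hh p z = hh p z + z * hh p z := by ring
  rw [e2, e3]
  nth_rewrite 1 [hh_ext p z]
  unfold hh
  rw [Finset.sum_range_succ' _ (p + 1), Finset.sum_range_succ' _ (p + 1), harm_zero, Finset.mul_sum]
  simp only [mul_zero, zero_mul, add_zero]
  rw [← Finset.sum_add_distrib, ← Finset.sum_add_distrib]
  refine Finset.sum_congr rfl fun k _ => ?_
  rw [harm_succ, Nat.choose_succ_succ]
  push_cast
  ring

theorem aa_hasSum (x : ℝ) (h0 : 0 < x) (h1 : x < 1) (p : ℕ) :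
    HasSum (fun k : ℕ => (-x) ^ k * aa p k)
      ((Real.log (1 + x) - (harmonic' p : ℝ)) * (1 + x) ^ p / x ^ (p + 1) + hh p (1 / x)) := by
  induction p with
  | zero =>
    have h := Real.hasSum_pow_div_log_of_abs_lt_one (x := -x) (by rw [abs_neg, abs_of_pos h0]; exact h1)
    have h2 := h.mul_left (-x)⁻¹
    refine hs_cong h2 (fun k => ?_) ?_
    · have : (-x) ≠ 0 := by linarith
      rw [aa, Nat.factorial_zero, add_zero, Nat.factorial_succ]
      have : (k.factorial : ℝ) ≠ 0 := by positivity
      push_cast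
      field_simp
      ring
    · simp [hh, harm_zero]
      field_simp
  | succ p ih =>
    have hx : (-x) ≠ 0 := by linarith
    have hs : HasSum (fun k : ℕ => (-x) ^ (k + 1) * aa p (k + 1)) _ :=
      (hasSum_nat_add_iff' 1).mpr ih
    have h2 := ih.sub (hs.mul_left (-x)⁻¹)
    refine hs_cong h2 (fun k => ?_) ?_
    · rw [aa_rec, pow_succ]
      field_simp
    · simp only [Finset.sum_range_one, pow_zero, one_mul, aa_zero]
      rw [hh_rec, harm_succ]
      have e : 1 + 1 / x = (1 + x) / x := by field_simp; ring
      rw [e, div_pow]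
      generalize hh p (1 / x) = w
      generalize Real.log (1 + x) = l
      generalize (harmonic' p : ℝ) = m
      have : (p : ℝ) + 1 ≠ 0 := by positivity
      rw [pow_succ x (p + 1), pow_succ x p, pow_succ (1 + x) p]
      field_simp
      ring

theorem aa_bound (p k : ℕ) : 0 ≤ (p + 1 : ℝ) * aa p k ∧ (p + 1 : ℝ) * aa p k ≤ 1 := by
  rw [← choose_aa]
  refine ⟨by positivity, inv_le_one_of_one_le₀ ?_⟩
  exact_mod_cast Nat.choose_pos (by omega : k ≤ k + p + 1)

theorem pBernoulli_egf (p : ℕ) :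
    ∃ ε : ℝ, 0 < ε ∧ ∀ t : ℝ, 0 < t → t < ε →
      HasSum (fun n : ℕ => (pBernoulli n p : ℝ) * t ^ n / (Nat.factorial n : ℝ))
        ((p + 1 : ℝ) * (t - (harmonic' p : ℝ)) * Real.exp (p * t) /
            (Real.exp t - 1) ^ (p + 1) +
          (p + 1 : ℝ) * ∑ k ∈ Finset.Icc 1 p,
            (Nat.choose p k : ℝ) * (harmonic' k : ℝ) / (Real.exp t - 1) ^ (k + 1)) := by
  refine ⟨Real.log 2, Real.log_pos (by norm_num), fun t ht0 ht1 => ?_⟩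
  set x := Real.exp t - 1 with hx
  have hx0 : 0 < x := by have := Real.add_one_lt_exp ht0.ne'; linarith
  have hx1 : x < 1 := by
    have := Real.exp_lt_exp.mpr ht1
    rw [Real.exp_log (by norm_num)] at this; linarith
  have key := (aa_hasSum x hx0 hx1 p).mul_left (p + 1 : ℝ)
  have e1 : 1 + x = Real.exp t := by rw [hx]; ring
  rw [e1, Real.log_exp, ← Real.exp_nat_mul] at key
  let F : ℕ × ℕ → ℝ := fun q =>
    ((-1) ^ q.1 * ((p + 1 : ℝ) * aa p q.1)) * (AA q.2 q.1 * (t ^ q.2 / (q.2.factorial : ℝ)))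
  have hrow : ∀ k, HasSum (fun n => F (k, n)) (((-1) ^ k * ((p + 1 : ℝ) * aa p k)) * x ^ k) :=
    fun k => (AA_hasSum k t).mul_left _
  have hnorm : ∀ k n, ‖F (k, n)‖ =
      ((p + 1 : ℝ) * aa p k) * (AA n k * (t ^ n / (n.factorial : ℝ))) := by
    intro k n
    have := (aa_bound p k).1
    have := AA_nonneg n k
    simp only [F, norm_mul, norm_pow, norm_neg, norm_one, one_pow, one_mul]
    rw [← norm_mul, ← norm_mul, ← norm_mul, Real.norm_of_nonneg (by positivity)]
  have hnrow : ∀ k, HasSum (fun n => ‖F (k, n)‖) (((p + 1 : ℝ) * aa p k) * x ^ k) := by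
    intro k
    simp only [hnorm]
    exact (AA_hasSum k t).mul_left _
  have hF : Summable F := by
    refine Summable.of_norm ?_
    rw [summable_prod_of_nonneg (fun _ => norm_nonneg _)]
    refine ⟨fun k => (hnrow k).summable, ?_⟩
    simp only [(hnrow _).tsum_eq]
    refine Summable.of_nonneg_of_le (fun k => ?_) (fun k => ?_)
      (summable_geometric_of_lt_one hx0.le hx1)
    · have := (aa_bound p k).1
      positivity
    · exact mul_le_of_le_one_left (by positivity) (aa_bound p k).2
  have hsum := hF.hasSum
  have hv := (hsum.prod_fiberwise hrow).unique (by
    refine hs_cong key (fun k => ?_) rfl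
    rw [neg_pow]; ring)
  rw [hv] at hsum
  have hswap := (Equiv.prodComm ℕ ℕ).hasSum_iff.mpr hsum
  have hfin := hswap.prod_fiberwise
    (g := fun n : ℕ => (pBernoulli n p : ℝ) * t ^ n / (Nat.factorial n : ℝ)) (by
      intro n
      have hz : ∀ k ∉ Finset.range (n + 1), (F ∘ (Equiv.prodComm ℕ ℕ)) (n, k) = 0 := by
        intro k hk
        have : n < k := by simpa [Nat.lt_succ_iff] using hk
        simp [F, AA_vanish n k this]
      refine hs_cong (hasSum_sum_of_ne_finset_zero hz) (fun _ => rfl) ?_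
      unfold pBernoulli
      push_cast
      rw [Finset.sum_mul, Finset.sum_div]
      refine Finset.sum_congr rfl fun k _ => ?_
      simp only [F, Function.comp, Equiv.prodComm_apply, Prod.swap]
      rw [← choose_aa, ← stirling2_AA]
      ring)
  convert hfin using 1
  rw [mul_add]
  congr 1
  · ring
  · congr 1
    have hI : Finset.Icc 1 p = Finset.Ico 1 (p + 1) := by ext; simp
    rw [hI, hh, Finset.sum_range_succ', harm_zero, Finset.sum_Ico_eq_sum_range]
    simp
    refine Finset.sum_congr rfl fun k _ => ?_
    rw [add_comm 1 k]
    ring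
end

section
/- Let n > p ≥ 0 be integers. Define real functions F_0, F_1, …, F_p by F_0(x) = w_n(x) (the n-th geometric polynomial) and F_{j+1}(x) = ∫_0^x F_j(u) du. Then ∫_{-1}^{0} F_p(x) dx = (-1)^p B_{n,p}/(p+1)!. -/
/-- The geometric polynomials. -/
noncomputable def geomPoly (n : ℕ) (x : ℝ) : ℝ :=
  ∑ k ∈ Finset.range (n + 1), (stirling2 n k : ℝ) * (Nat.factorial k : ℝ) * x ^ k

/-- Iterated antiderivatives of the geometric polynomial, starting at `0`. -/
noncomputable def geomIter (n : ℕ) : ℕ → ℝ → ℝ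
  | 0 => geomPoly n
  | j + 1 => fun x => ∫ u in (0 : ℝ)..x, geomIter n j u

lemma geomIter_eq (n p : ℕ) (x : ℝ) :
    geomIter n p x = ∑ k ∈ Finset.range (n + 1),
      (stirling2 n k : ℝ) * (Nat.factorial k : ℝ) *
        ((Nat.factorial k : ℝ) / (Nat.factorial (k + p) : ℝ)) * x ^ (k + p) := by
  induction p generalizing x with
  | zero =>
    simp only [geomIter, geomPoly, Nat.add_zero]
    refine Finset.sum_congr rfl fun k _ => ?_
    have : (Nat.factorial k : ℝ) ≠ 0 := by positivity
    field_simp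
  | succ p ih =>
    simp only [geomIter, ih]
    rw [intervalIntegral.integral_finsetSum
      (fun k _ => (by fun_prop : Continuous _).intervalIntegrable _ _)]
    refine Finset.sum_congr rfl fun k _ => ?_
    rw [intervalIntegral.integral_const_mul, integral_pow, ← add_assoc k p 1,
      Nat.factorial_succ (k + p)]
    have : (Nat.factorial (k + p) : ℝ) ≠ 0 := by positivity
    have h2 : ((k : ℝ) + p + 1) ≠ 0 := by positivity
    push_cast
    rw [zero_pow (by omega)]
    field_simp
    ring

theorem iterated_integral_geomPoly_eq_pBernoulli (n p : ℕ) (h : p < n) :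
    ∫ x in (-1 : ℝ)..0, geomIter n p x =
      (-1 : ℝ) ^ p * (pBernoulli n p : ℝ) / (Nat.factorial (p + 1) : ℝ) := by
  simp only [geomIter_eq, pBernoulli]
  rw [intervalIntegral.integral_finsetSum
      (fun k _ => (by fun_prop : Continuous _).intervalIntegrable _ _)]
  push_cast
  rw [Finset.mul_sum, Finset.sum_div]
  refine Finset.sum_congr rfl fun k _ => ?_
  rw [intervalIntegral.integral_const_mul, integral_pow, zero_pow (by omega)]
  have hc : ((Nat.choose (k + p + 1) k : ℕ) : ℝ) =
      ((k : ℝ) + p + 1) * (Nat.factorial (k + p) : ℝ) /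
        ((Nat.factorial k : ℝ) * (Nat.factorial (p + 1) : ℝ)) := by
    rw [add_assoc k p 1, Nat.cast_add_choose, ← add_assoc k p 1, Nat.factorial_succ (k + p)]
    push_cast
    ring
  rw [hc]
  have h0 : (Nat.factorial k : ℝ) ≠ 0 := by positivity
  have h1 : (Nat.factorial (k + p) : ℝ) ≠ 0 := by positivity
  have h2 : ((k : ℝ) + p + 1) ≠ 0 := by positivity
  have h3 : (Nat.factorial (p + 1) : ℝ) ≠ 0 := by positivity
  push_cast
  field_simp
  ring
end

section
/- For all integers n > p ≥ 0, Σ_{k=p+1}^{n} C(n,k) S(k,p+1) B_{n−k,p} = p^{n−1}(n − p·H_p)/p! + Σ_{j=1}^{p} S(n,p−j) H_j/j!, with the convention 0^0 = 1. -/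
open Finset in
theorem S_zero_right (n : ℕ) : stirling2 (n+1) 0 = 0 := by simp [stirling2]

open Finset in
theorem S_rec (n k : ℕ) : stirling2 (n+1) (k+1) = (k+1) * stirling2 n (k+1) + stirling2 n k := by
  have key : ∑ j ∈ range (k + 1 + 1), (-1 : ℚ) ^ (k + 1 - j) * (Nat.choose (k+1) j : ℚ) * (j : ℚ) ^ (n+1)
      = (k+1) * ∑ j ∈ range (k + 1 + 1), (-1 : ℚ) ^ (k + 1 - j) * (Nat.choose (k+1) j : ℚ) * (j : ℚ) ^ n
      + (k+1) * ∑ j ∈ range (k + 1), (-1 : ℚ) ^ (k - j) * (Nat.choose k j : ℚ) * (j : ℚ) ^ n := by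
    rw [sum_range_succ, sum_range_succ _ (k+1), mul_add, mul_sum, mul_sum, add_right_comm,
      ← sum_add_distrib]
    congr 1
    · apply sum_congr rfl
      intro j hj
      have hj' : j ≤ k := by simpa [Nat.lt_succ_iff] using hj
      have h1 : ((k.choose j : ℕ) : ℚ) * (k+1) = ((k+1).choose j : ℕ) * (k + 1 - j) := by
        have := Nat.choose_mul_succ_eq k j
        have h2 : ((k + 1 - j : ℕ) : ℚ) = k + 1 - j := by
          rw [Nat.cast_sub (by omega)]; push_cast; ring
        rw [← h2]; exact_mod_cast this
      have h3 : (-1 : ℚ) ^ (k + 1 - j) = - (-1) ^ (k - j) := by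
        rw [Nat.succ_sub hj', pow_succ]; ring
      rw [h3, pow_succ]
      linear_combination (-(-1) ^ (k - j) * (j:ℚ)^n) * h1
    · simp; ring
  unfold stirling2
  rw [key, Nat.factorial_succ]
  have : (k.factorial : ℚ) ≠ 0 := by positivity
  have : (k + 1 : ℚ) ≠ 0 := by positivity
  push_cast
  field_simp

open Finset in
theorem S_zero (k : ℕ) : stirling2 0 (k+1) = 0 := by
  have := add_pow (1:ℚ) (-1) (k+1)
  simp only [add_neg_cancel, one_pow, one_mul] at this
  unfold stirling2
  rw [mul_eq_zero]; right
  simp only [pow_zero, mul_one]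
  rw [← this]; simp

theorem S_lt (n k : ℕ) (h : n < k) : stirling2 n k = 0 := by
  induction n generalizing k with
  | zero => obtain ⟨k, rfl⟩ : ∃ l, k = l + 1 := ⟨k - 1, by omega⟩
            exact S_zero k
  | succ n ih =>
    obtain ⟨k, rfl⟩ : ∃ l, k = l + 1 := ⟨k - 1, by omega⟩
    rw [S_rec, ih _ (by omega), ih _ (by omega)]; simp

open Finset PowerSeries in
theorem S_coeff (n k : ℕ) : coeff n ((exp ℚ - 1) ^ k) = k.factorial * stirling2 n k / n.factorial := by
  rw [sub_eq_add_neg, add_pow]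
  have : (k.factorial : ℚ) ≠ 0 := by positivity
  unfold stirling2
  rw [map_sum, ← mul_assoc, mul_one_div_cancel this, one_mul, sum_div]
  apply sum_congr rfl
  intro j hj
  have e : ((-1 : PowerSeries ℚ) ^ (k - j)) * ((k.choose j : ℕ) : PowerSeries ℚ)
      = C ((-1) ^ (k-j) * (k.choose j : ℚ)) := by simp
  rw [mul_assoc, e, coeff_mul_C, exp_pow_eq_rescale_exp, coeff_rescale, coeff_exp]
  simp; ring

open Finset PowerSeries in
theorem S_pow (n p : ℕ) : (p:ℚ)^n / p.factorial
    = ∑ j ∈ range (p+1), stirling2 n (p - j) / j.factorial := by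
  have h : coeff n (exp ℚ ^ p) = coeff n ((1 + (exp ℚ - 1)) ^ p) := by congr 2; ring
  rw [add_pow, exp_pow_eq_rescale_exp, coeff_rescale, coeff_exp, map_sum] at h
  have h2 : ∀ j ∈ range (p+1), coeff n (1 ^ j * (exp ℚ - 1) ^ (p - j) * ((p.choose j : ℕ) : PowerSeries ℚ))
      = (p.factorial / n.factorial) * (stirling2 n (p - j) / j.factorial) := by
    intro j hj
    have hj' : j ≤ p := by simpa [Nat.lt_succ_iff] using hj
    have e : ((p.choose j : ℕ) : PowerSeries ℚ) = C (p.choose j : ℚ) := by simp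
    rw [e, coeff_mul_C, one_pow, one_mul, S_coeff, Nat.cast_choose ℚ hj']
    have : ((p-j).factorial : ℚ) ≠ 0 := by positivity
    field_simp
  rw [sum_congr rfl h2, ← mul_sum] at h
  simp only [Algebra.algebraMap_self, RingHom.id_apply] at h
  have : (p.factorial : ℚ) ≠ 0 := by positivity
  have : (n.factorial : ℚ) ≠ 0 := by positivity
  field_simp at h ⊢
  linarith

open Finset PowerSeries in
theorem S_conv (n a b : ℕ) : ∑ m ∈ range (n+1), (n.choose m : ℚ) * stirling2 m a * stirling2 (n-m) b
    = ((b+a).choose b : ℚ) * stirling2 n (b+a) := by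
  have h : coeff n ((exp ℚ - 1) ^ (b+a)) = coeff n ((exp ℚ - 1) ^ a * (exp ℚ - 1) ^ b) := by
    rw [← pow_add, add_comm]
  rw [coeff_mul, Finset.Nat.sum_antidiagonal_eq_sum_range_succ_mk, S_coeff] at h
  have h2 : ∀ m ∈ range n.succ, coeff (m, n-m).1 ((exp ℚ - 1) ^ a) * coeff (m, n-m).2 ((exp ℚ - 1) ^ b)
      = (a.factorial * b.factorial / n.factorial) * ((n.choose m : ℚ) * stirling2 m a * stirling2 (n-m) b) := by
    intro m hm
    have hm' : m ≤ n := by simpa [Nat.lt_succ_iff] using hm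
    rw [S_coeff, S_coeff, Nat.cast_choose ℚ hm']
    have : ((n-m).factorial : ℚ) ≠ 0 := by positivity
    have : (n.factorial : ℚ) ≠ 0 := by positivity
    field_simp
  rw [sum_congr rfl h2, ← mul_sum] at h
  rw [Nat.cast_choose ℚ (Nat.le_add_right b a), Nat.add_sub_cancel_left]
  have : (a.factorial : ℚ) ≠ 0 := by positivity
  have : (b.factorial : ℚ) ≠ 0 := by positivity
  have : (n.factorial : ℚ) ≠ 0 := by positivity
  field_simp at h ⊢
  linarith

open Finset in
theorem L_rec (n p N : ℕ) :
    ∑ k ∈ range N, (-1:ℚ)^k * k.factorial * stirling2 (n+1) (k+p+1)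
    = p * ∑ k ∈ range N, (-1:ℚ)^k * k.factorial * stirling2 n (k+p+1)
      + stirling2 n p - (-1)^N * N.factorial * stirling2 n (N+p) := by
  induction N with
  | zero => simp
  | succ N ih =>
    rw [sum_range_succ, ih, sum_range_succ, S_rec, Nat.factorial_succ, pow_succ,
      show N + 1 + p = N + p + 1 by ring]
    push_cast
    ring

theorem har_succ (q : ℕ) : harmonic' (q+1) = harmonic' q + 1 / (q+1) := by
  unfold harmonic'
  rw [Finset.sum_Icc_succ_top (by omega)]; push_cast; rfl

open Finset in
theorem R_aux (n p q : ℕ) (h : q ≤ p) :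
    ∑ j ∈ range (q+1), (stirling2 (n+1) (p-j) - p * stirling2 n (p-j)) * harmonic' j / j.factorial
    = - ∑ j ∈ range q, stirling2 n (p-(j+1)) / (j+1).factorial
      + harmonic' q / q.factorial * (stirling2 (n+1) (p-q) - (p - q) * stirling2 n (p-q)) := by
  induction q with
  | zero => simp [harmonic']
  | succ q ih =>
    rw [sum_range_succ, ih (by omega), sum_range_succ _ q]
    obtain ⟨r, rfl⟩ : ∃ r, p = q + 1 + r := ⟨p - (q+1), by omega⟩
    rw [show q + 1 + r - q = r + 1 by omega, show q + 1 + r - (q+1) = r by omega, S_rec, har_succ,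
      Nat.factorial_succ]
    have : (q.factorial : ℚ) ≠ 0 := by positivity
    have : (q + 1 : ℚ) ≠ 0 := by positivity
    push_cast
    field_simp
    ring

open Finset in
theorem D_last (n : ℕ) : stirling2 (n+1) 0 - 0 * stirling2 n 0 = 0 := by simp [S_zero_right]

open Finset in
theorem main_aux (N p n : ℕ) (h : n ≤ N) :
    ∑ k ∈ range (N+1), (-1:ℚ)^k * k.factorial * stirling2 n (k+p+1)
    = (n * (p:ℚ)^(n-1) - p^n * harmonic' p) / p.factorial
      + ∑ j ∈ range (p+1), stirling2 n (p-j) * harmonic' j / j.factorial := by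
  induction n with
  | zero =>
    rw [sum_eq_zero (fun k _ => by rw [S_zero]; simp), sum_range_succ,
      sum_eq_zero (s := range p)]
    · have : stirling2 0 0 = 1 := by simp [stirling2]
      simp [this]; ring
    · intro j hj
      rw [S_lt _ _ (by have := mem_range.1 hj; omega)]; simp
  | succ n ih =>
    rw [L_rec, ih (by omega), S_lt n (N+1+p) (by omega)]
    have h1 := R_aux n p p le_rfl
    have h2 := S_pow n p
    rw [sum_range_succ'] at h2
    simp only [Nat.sub_self, sub_self, D_last, mul_zero, add_zero] at h1
    simp only [sub_mul, sub_div, sum_sub_distrib] at h1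
    have h3 : ∑ j ∈ range (p+1), p * stirling2 n (p-j) * harmonic' j / j.factorial
      = p * ∑ j ∈ range (p+1), stirling2 n (p-j) * harmonic' j / j.factorial := by
      rw [mul_sum]; exact sum_congr rfl fun _ _ => by ring
    rw [h3] at h1
    simp at h2
    have h4 : (n:ℚ) * p^(n-1) * p = n * p^n := by
      cases n with
      | zero => simp
      | succ n => simp [pow_succ]; ring
    simp only [Nat.add_sub_cancel]
    push_cast
    rw [pow_succ]
    linear_combination (-1) * h1 - h2 + h4 / p.factorial

open Finset in
theorem lhs_eq (n p : ℕ) :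
    ∑ k ∈ Finset.Icc (p + 1) n, (Nat.choose n k : ℚ) * stirling2 k (p + 1) * pBernoulli (n - k) p
    = ∑ k ∈ range (n+1), (-1:ℚ)^k * k.factorial * stirling2 n (k+p+1) := by
  have hB : ∀ m, m ≤ n → pBernoulli m p = ∑ k ∈ range (n + 1),
    (-1 : ℚ) ^ k * stirling2 m k * ((Nat.choose (k + p + 1) k : ℚ))⁻¹ * (Nat.factorial k : ℚ) := by
    intro m hm
    unfold pBernoulli
    apply sum_subset
    · intro x; simp; omega
    · intro x _ hx
      rw [S_lt m x (by simpa using hx)]; simp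
  have h1 : ∑ k ∈ Finset.Icc (p + 1) n, (Nat.choose n k : ℚ) * stirling2 k (p + 1) * pBernoulli (n - k) p
    = ∑ k ∈ range (n+1), (Nat.choose n k : ℚ) * stirling2 k (p + 1) * pBernoulli (n - k) p := by
    apply sum_subset
    · intro x; simp
    · intro x hx hx'
      rw [S_lt x (p+1) (by simp at hx hx'; omega)]; simp
  rw [h1]
  calc _ = ∑ m ∈ range (n+1), ∑ k ∈ range (n+1), ((-1 : ℚ) ^ k * ((Nat.choose (k + p + 1) k : ℚ))⁻¹ * (Nat.factorial k : ℚ)) * ((n.choose m : ℚ) * stirling2 m (p+1) * stirling2 (n-m) k) := by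
        apply sum_congr rfl
        intro m _
        rw [hB _ (by omega), mul_sum]
        exact sum_congr rfl fun _ _ => by ring
    _ = _ := by
        rw [sum_comm]
        apply sum_congr rfl
        intro k _
        rw [← mul_sum, S_conv, ← add_assoc]
        have : ((k+p+1).choose k : ℚ) ≠ 0 := by
          exact_mod_cast (Nat.choose_pos (by omega)).ne'
        field_simp

theorem sum_stirling2_pBernoulli (n p : ℕ) (h : p < n) :
    ∑ k ∈ Finset.Icc (p + 1) n, (Nat.choose n k : ℚ) * stirling2 k (p + 1) * pBernoulli (n - k) p =
      (p : ℚ) ^ (n - 1) * ((n : ℚ) - (p : ℚ) * harmonic' p) / (Nat.factorial p : ℚ) +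
        ∑ j ∈ Finset.Icc 1 p, stirling2 n (p - j) * harmonic' j / (Nat.factorial j : ℚ) := by
  rw [lhs_eq, main_aux n p n le_rfl]
  congr 1
  · obtain ⟨m, rfl⟩ : ∃ m, n = m + 1 := ⟨n - 1, by omega⟩
    simp only [Nat.add_sub_cancel, pow_succ]
    ring
  · symm
    apply Finset.sum_subset
    · intro x; simp
    · intro x hx hx'
      have : x = 0 := by simp at hx hx'; omega
      subst this
      simp [harmonic']
end

section
/- For all integers n > p ≥ 0, Σ_{k=p+1}^{n} Σ_{j=0}^{p} C(n,k) S(k,p+1) c(p,j) (-1)^j B_{n+j−k} = p^{n−1}(n − p·H_p)/(p+1) + (p!/(p+1)) Σ_{j=1}^{p} S(n,p−j) H_j/j!, with the convention 0^0 = 1. -/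
/-- Unsigned Stirling numbers of the first kind, defined as the coefficients of the
ascending factorial `x (x+1) ⋯ (x+p-1)`. -/
noncomputable def stirling1 (p j : ℕ) : ℚ := (ascPochhammer ℚ p).coeff j

namespace SSB

open Polynomial Finset

/-- Bernoulli functional. -/
noncomputable def L : ℚ[X] →ₗ[ℚ] ℚ :=
  Polynomial.lsum (fun n => (_root_.bernoulli n) • (LinearMap.id : ℚ →ₗ[ℚ] ℚ))

lemma L_monomial (n : ℕ) (a : ℚ) : L (monomial n a) = a * _root_.bernoulli n := by
  simp [L, Polynomial.lsum_apply, Polynomial.sum_monomial_index, mul_comm]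

lemma L_C_mul_X_pow (n : ℕ) (a : ℚ) : L (C a * X ^ n) = a * _root_.bernoulli n := by
  rw [C_mul_X_pow_eq_monomial, L_monomial]

noncomputable def E : Module.End ℚ ℚ[X] := taylor 1

lemma E_apply (f : ℚ[X]) : E f = f.comp (X + 1) := by
  simp [E, taylor_apply]

lemma E_mul (f g : ℚ[X]) : E (f * g) = E f * E g := by
  simp [E_apply]

lemma L_E (f : ℚ[X]) : L (E f) - L f = (derivative f).eval 0 := by
  induction f using Polynomial.induction_on' with
  | add p q hp hq => simp only [map_add, eval_add, ← hp, ← hq]; ring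
  | monomial n a =>
    have h1 : E (monomial n a) = ∑ k ∈ range (n + 1), C (a * (n.choose k : ℚ)) * X ^ k := by
      rw [E_apply, monomial_comp, add_pow, mul_sum]
      refine sum_congr rfl fun k _ => ?_
      simp
      ring
    rw [h1, map_sum, L_monomial]
    simp only [L_C_mul_X_pow]
    rw [sum_range_succ]
    have := _root_.sum_bernoulli n
    simp only [mul_assoc, ← mul_sum]
    rw [this]
    simp only [derivative_monomial, eval_monomial, Nat.choose_self]
    rcases n with _ | _ | n <;> simp

noncomputable def T : Module.End ℚ ℚ[X] := E - 1

lemma T_apply (f : ℚ[X]) : T f = E f - f := by simp [T]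

lemma comm_ET : Commute E T := by
  unfold T; exact (Commute.refl E).sub_right (Commute.one_right E)

lemma L_T (f : ℚ[X]) : L (T f) = (derivative f).eval 0 := by
  rw [T_apply, map_sub, L_E]

lemma by_parts (f g : ℚ[X]) :
    L (f * T g) = (derivative (f * g)).eval 0 - L (T f * E g) := by
  rw [← L_T, ← map_sub]
  congr 1
  simp only [T_apply, E_mul]; ring

lemma T_desc (p : ℕ) :
    T (descPochhammer ℚ (p + 1)) = C ((p : ℚ) + 1) * descPochhammer ℚ p := by
  rw [T_apply, E_apply]
  conv_lhs => enter [1]; rw [descPochhammer_succ_left]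
  rw [descPochhammer_succ_right]
  simp [mul_comp, comp_assoc]
  ring

lemma iter_parts (p : ℕ) : ∀ g : ℚ[X],
    L (descPochhammer ℚ p * (T ^ (p + 1)) g) =
      ∑ m ∈ range (p + 1), (-1 : ℚ) ^ (p - m) * ((p.factorial : ℚ) / m.factorial) *
        (derivative (descPochhammer ℚ m * (E ^ (p - m) * T ^ m) g)).eval 0 := by
  induction p with
  | zero => intro g; simp [L_T]
  | succ p ih =>
    intro g
    rw [pow_succ' T (p + 1), Module.End.mul_apply, by_parts, T_desc]
    have h1 : E ((T ^ (p + 1)) g) = (T ^ (p + 1)) (E g) := by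
      have := (comm_ET.pow_right (p + 1)).eq
      exact LinearMap.congr_fun this g
    rw [h1, mul_assoc, ← smul_eq_C_mul, map_smul, ih, sum_range_succ _ (p + 1)]
    simp only [Nat.sub_self, pow_zero, one_mul, smul_eq_mul]
    rw [div_self (by positivity), one_mul, sub_eq_add_neg, ← neg_one_mul, mul_sum,
      mul_sum, add_comm (eval _ _)]
    congr 1
    refine sum_congr rfl fun m hm => ?_
    have hm' : m ≤ p := by have := mem_range.1 hm; omega
    have h2 : (E ^ (p - m) * T ^ m) (E g) = (E ^ (p + 1 - m) * T ^ m) g := by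
      have : E ^ (p - m) * T ^ m * E = E ^ (p + 1 - m) * T ^ m := by
        rw [mul_assoc, ← (comm_ET.pow_right m).eq, ← mul_assoc, ← pow_succ, Nat.succ_sub hm']
      rw [← this]; rfl
    rw [h2, Nat.succ_sub hm', pow_succ (-1 : ℚ), Nat.factorial_succ]
    push_cast
    ring

lemma desc_eval_zero (m : ℕ) : (descPochhammer ℚ (m + 1)).eval 0 = 0 := by
  rw [descPochhammer_succ_left]; simp

lemma desc_deriv_zero (m : ℕ) :
    (derivative (descPochhammer ℚ (m + 1))).eval 0 = (-1) ^ m * m.factorial := by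
  induction m with
  | zero => simp
  | succ m ih =>
    rw [descPochhammer_succ_right, derivative_mul]
    simp [ih, desc_eval_zero, Nat.factorial_succ, pow_succ]
    ring

lemma iter_parts' (p n : ℕ) :
    (-1) ^ p / (p.factorial : ℚ) * L (descPochhammer ℚ p * (T ^ (p + 1)) (X ^ n)) =
      (derivative ((E ^ p) (X ^ n))).eval 0 -
      ∑ m ∈ Icc 1 p, 1 / (m : ℚ) * ((E ^ (p - m) * T ^ m) (X ^ n)).eval 0 := by
  rw [iter_parts, sum_range_succ', mul_add, add_comm, sub_eq_add_neg]
  congr 1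
  · have : (p.factorial : ℚ) ≠ 0 := by positivity
    simp
    field_simp
    rw [← pow_mul, mul_comm p 2, pow_mul]; simp
  · rw [range_eq_Ico, sum_Ico_add' (fun m => (-1 : ℚ) ^ (p - m) * ((p.factorial : ℚ) / m.factorial) *
        (derivative (descPochhammer ℚ m * (E ^ (p - m) * T ^ m) (X ^ n))).eval 0) 0 p 1, mul_sum,
      ← sum_neg_distrib]
    refine sum_congr (by ext; simp only [mem_Ico, mem_Icc]; omega) fun m hm => ?_
    obtain ⟨h1, h2⟩ := mem_Icc.1 (show m ∈ Icc 1 p by simp only [mem_Ico, mem_Icc] at hm ⊢; omega)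
    obtain ⟨k, rfl⟩ : ∃ k, m = k + 1 := ⟨m - 1, by omega⟩
    rw [derivative_mul, eval_add, eval_mul, eval_mul, desc_eval_zero, desc_deriv_zero]
    obtain ⟨q, rfl⟩ : ∃ q, p = q + (k + 1) := ⟨p - (k + 1), by omega⟩
    have e : (-1 : ℚ) ^ (q + (k + 1)) * ((-1) ^ q * (-1) ^ k) = -1 := by
      rw [pow_add, pow_succ]
      have a1 : (-1 : ℚ) ^ q * (-1) ^ q = 1 := by rw [← mul_pow]; simp
      have a2 : (-1 : ℚ) ^ k * (-1) ^ k = 1 := by rw [← mul_pow]; simp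
      linear_combination (-((-1 : ℚ) ^ k * (-1) ^ k)) * a1 - a2
    have f1 : ((q + (k + 1)).factorial : ℚ) ≠ 0 := by positivity
    have f2 : ((k).factorial : ℚ) ≠ 0 := by positivity
    rw [Nat.add_sub_cancel, Nat.factorial_succ k]
    generalize ((E ^ q * T ^ (k + 1)) (X ^ n)).eval 0 = v
    push_cast
    have z : (k : ℚ) + 1 ≠ 0 := by positivity
    field_simp
    linear_combination (v * (k.factorial : ℚ)) * e

lemma harm_succ (p : ℕ) : harmonic' (p + 1) = harmonic' p + 1 / ((p : ℚ) + 1) := by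
  unfold harmonic'
  rw [Finset.sum_Icc_succ_top (by omega)]
  push_cast; rfl

lemma poly_id (p : ℕ) :
    ∑ m ∈ Icc 1 p, C (1 / (m : ℚ)) * ((X + 1) ^ (p - m) * X ^ m : ℚ[X]) =
      C (harmonic' p) * (X + 1) ^ p -
        ∑ j ∈ range (p + 1), C ((p.choose j : ℚ) * harmonic' j) * X ^ (p - j) := by
  induction p with
  | zero => simp [harmonic']
  | succ p ih =>
    rw [Finset.sum_Icc_succ_top (by omega)]
    have h1 : ∑ m ∈ Icc 1 p, C (1 / (m : ℚ)) * ((X + 1) ^ (p + 1 - m) * X ^ m : ℚ[X]) =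
        (X + 1) * ∑ m ∈ Icc 1 p, C (1 / (m : ℚ)) * ((X + 1) ^ (p - m) * X ^ m : ℚ[X]) := by
      rw [mul_sum]
      refine sum_congr rfl fun m hm => ?_
      rw [Nat.succ_sub (mem_Icc.1 hm).2, pow_succ]; ring
    have hb : (X + 1 : ℚ[X]) ^ (p + 1) =
        X ^ (p + 1) + ∑ j ∈ range (p + 1), C (((p + 1).choose (j + 1) : ℚ)) * X ^ (p - j) := by
      rw [add_comm X 1, add_pow, sum_range_succ', add_comm]
      simp [mul_comm]
    have h0 : harmonic' 0 = 0 := by simp [harmonic']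
    have h2 : (X + 1) * ∑ j ∈ range (p + 1), C ((p.choose j : ℚ) * harmonic' j) * X ^ (p - j)
        = ∑ j ∈ range (p + 1), C ((p.choose j : ℚ) * harmonic' j +
            (p.choose (j + 1) : ℚ) * harmonic' (j + 1)) * X ^ (p - j) := by
      have : X * ∑ j ∈ range (p + 1), C ((p.choose j : ℚ) * harmonic' j) * X ^ (p - j)
        = ∑ j ∈ range (p + 1), C ((p.choose (j + 1) : ℚ) * harmonic' (j + 1)) * X ^ (p - j) := by
        rw [sum_range_succ', sum_range_succ]
        simp only [h0, Nat.choose_succ_self, mul_add, mul_sum]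
        simp
        refine sum_congr rfl fun j hj => ?_
        have : p - j = p - (j + 1) + 1 := by have := mem_range.1 hj; omega
        rw [this, pow_succ]; ring
      rw [add_mul, this, one_mul, ← sum_add_distrib]
      refine sum_congr rfl fun j hj => ?_
      simp only [C_add]; ring
    have h3 : ∑ j ∈ range (p + 1 + 1), C (((p + 1).choose j : ℚ) * harmonic' j) * X ^ (p + 1 - j)
        = ∑ j ∈ range (p + 1), C ((p.choose j : ℚ) * harmonic' j +
            (p.choose (j + 1) : ℚ) * harmonic' (j + 1)) * X ^ (p - j) +
          C (1 / ((p : ℚ) + 1)) * ∑ j ∈ range (p + 1),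
            C (((p + 1).choose (j + 1) : ℚ)) * X ^ (p - j) := by
      rw [sum_range_succ', h0, mul_sum, ← sum_add_distrib]
      simp only [mul_zero, C_0, zero_mul, add_zero, Nat.add_sub_add_right]
      refine sum_congr rfl fun j hj => ?_
      rw [← mul_assoc, ← C_mul, ← add_mul, ← C_add]
      congr 2
      have hc : ((p : ℚ) + 1) * (p.choose j) = (p + 1).choose (j + 1) * ((j : ℚ) + 1) := by
        exact_mod_cast Nat.add_one_mul_choose_eq p j
      have hd : (((p + 1).choose (j + 1) : ℕ) : ℚ) = p.choose j + p.choose (j + 1) := by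
        exact_mod_cast Nat.choose_succ_succ p j
      rw [harm_succ]
      have z1 : (p : ℚ) + 1 ≠ 0 := by positivity
      have z2 : (j : ℚ) + 1 ≠ 0 := by positivity
      have : ((p + 1).choose (j + 1) : ℚ) * (1 / ((p : ℚ) + 1)) = p.choose j * (1 / ((j : ℚ) + 1)) := by
        field_simp; linear_combination -hc
      linear_combination (harmonic' j + 1 / ((j : ℚ) + 1)) * hd - this
    rw [h1, ih, mul_sub, h2, h3, harm_succ, C_add]
    simp only [Nat.sub_self, pow_zero, one_mul]
    push_cast
    linear_combination (-C (1 / ((p : ℚ) + 1))) * hb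

lemma E_pow_eval (i n : ℕ) : (E ^ i) (X ^ n : ℚ[X]) = (X + C (i : ℚ)) ^ n := by
  induction i with
  | zero => simp
  | succ i ih =>
    rw [pow_succ', Module.End.mul_apply, ih, E_apply]
    simp
    ring

lemma T_pow (m n : ℕ) : (T ^ m) (X ^ n : ℚ[X]) =
    ∑ i ∈ range (m + 1), C ((-1 : ℚ) ^ (m - i) * (m.choose i : ℚ)) * (X + C (i : ℚ)) ^ n := by
  have : T = E + (-1) := sub_eq_add_neg _ _
  rw [this, (Commute.neg_one_right E).add_pow, LinearMap.sum_apply]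
  refine sum_congr rfl fun i _ => ?_
  rw [← E_pow_eval, ← smul_eq_C_mul, mul_smul]
  have hN : (E ^ i) ((m.choose i : ℚ[X]) * X ^ n) = (m.choose i : ℚ[X]) * (E ^ i) (X ^ n) := by
    rw [← nsmul_eq_mul, ← nsmul_eq_mul, map_nsmul]
  rcases Nat.even_or_odd (m - i) with h | h
  · rw [h.neg_one_pow, h.neg_one_pow]
    simp [hN, smul_eq_C_mul]
  · rw [h.neg_one_pow, h.neg_one_pow]
    simp [hN, smul_eq_C_mul]

lemma T_pow_eval (m n : ℕ) : ((T ^ m) (X ^ n : ℚ[X])).eval 0 = m.factorial * stirling2 n m := by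
  have : (m.factorial : ℚ) ≠ 0 := by positivity
  rw [T_pow, eval_finsetSum, stirling2, ← mul_assoc, mul_one_div, div_self this, one_mul]
  refine sum_congr rfl fun i _ => ?_
  simp

lemma stirling2_zero (k m : ℕ) (h : k < m) : stirling2 k m = 0 := by
  have h1 : (T ^ m) (X ^ k : ℚ[X]) = 0 := by
    have key : ∀ m : ℕ, ∀ f : ℚ[X], f.degree < (m : WithBot ℕ) → (T ^ m) f = 0 := by
      intro m
      induction m with
      | zero => intro f hf; simpa [Nat.WithBot.lt_zero_iff] using hf
      | succ m ih =>
        intro f hf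
        rw [pow_succ, Module.End.mul_apply]
        apply ih
        rw [T_apply]
        by_cases hf0 : f = 0
        · subst hf0; simp [WithBot.bot_lt_coe]
        have hlt : (E f - f).degree < f.degree := by
          have hd : (E f).degree = f.degree := by unfold E; exact degree_taylor f 1
          rw [← hd]
          apply degree_sub_lt_left hd
          · intro h0; rw [h0, degree_zero] at hd; exact hf0 (degree_eq_bot.1 hd.symm)
          · unfold E; exact leadingCoeff_taylor 1 f
        rw [degree_eq_natDegree hf0] at hf hlt
        have : f.natDegree ≤ m := by
          have : f.natDegree < m + 1 := by exact_mod_cast hf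
          omega
        exact lt_of_lt_of_le hlt (by exact_mod_cast this)
    apply key
    rw [degree_X_pow]; exact_mod_cast h
  have := T_pow_eval m k
  rw [h1, eval_zero] at this
  have hm : (m.factorial : ℚ) ≠ 0 := by positivity
  exact (mul_eq_zero.1 this.symm).resolve_left hm

lemma lhs_poly (n p : ℕ) :
    C (1 / ((p + 1).factorial : ℚ)) * (T ^ (p + 1)) (X ^ n : ℚ[X]) =
      ∑ k ∈ Icc (p + 1) n, C ((n.choose k : ℚ) * stirling2 k (p + 1)) * X ^ (n - k) := by
  have h1 : ∑ k ∈ Icc (p + 1) n, C ((n.choose k : ℚ) * stirling2 k (p + 1)) * X ^ (n - k) =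
      ∑ k ∈ range (n + 1), C ((n.choose k : ℚ) * stirling2 k (p + 1)) * X ^ (n - k) := by
    apply sum_subset
    · intro k hk; simp at hk ⊢; omega
    · intro k hk hk'
      rw [stirling2_zero k (p + 1) (by simp at hk hk'; omega)]; simp
  rw [h1, T_pow]
  simp only [stirling2, add_comm X (C _), add_pow, mul_sum, sum_mul, map_sum]
  rw [sum_comm]
  refine sum_congr rfl fun k _ => sum_congr rfl fun i _ => ?_
  simp only [C_mul, C_pow, C_eq_natCast]
  ring

lemma asc_poly (p : ℕ) :
    ∑ j ∈ range (p + 1), C (stirling1 p j * (-1 : ℚ) ^ j) * X ^ j =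
      C ((-1 : ℚ) ^ p) * descPochhammer ℚ p := by
  have h1 : (ascPochhammer ℚ p).comp (-X) = C ((-1 : ℚ) ^ p) * descPochhammer ℚ p := by
    induction p with
    | zero => simp
    | succ p ih =>
      rw [ascPochhammer_succ_right, descPochhammer_succ_right, mul_comp, ih]
      simp [pow_succ]
      ring
  rw [← h1]
  conv_rhs => rw [(ascPochhammer ℚ p).as_sum_range' (p + 1) (by rw [ascPochhammer_natDegree]; omega)]
  rw [← coe_compRingHom_apply, map_sum]
  simp only [coe_compRingHom_apply]
  refine sum_congr rfl fun j _ => ?_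
  rw [monomial_comp, stirling1, C_mul, neg_pow]
  simp
  ring

lemma op_id (n p : ℕ) :
    ∑ m ∈ Icc 1 p, 1 / (m : ℚ) * ((E ^ (p - m) * T ^ m) (X ^ n)).eval 0 =
      harmonic' p * (p : ℚ) ^ n - ∑ j ∈ range (p + 1), (p.choose j : ℚ) * harmonic' j *
        ((p - j).factorial * stirling2 n (p - j)) := by
  have := congrArg (fun P => ((aeval T P) (X ^ n : ℚ[X])).eval 0) (poly_id p)
  have hE : T + 1 = E := by simp [T]
  simp only [map_sum, map_sub, map_mul, map_pow, map_add, map_one, aeval_X, aeval_C, hE,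
    LinearMap.sum_apply, LinearMap.sub_apply, Module.End.mul_apply, Module.algebraMap_end_apply,
    eval_finsetSum, eval_sub, eval_smul, smul_eq_mul, T_pow_eval, E_pow_eval] at this
  simp only [Module.End.mul_apply]
  rw [this]
  simp [mul_assoc, mul_left_comm]

theorem main (n p : ℕ) (h : p < n) :
    ∑ k ∈ Finset.Icc (p + 1) n, ∑ j ∈ Finset.range (p + 1),
        (Nat.choose n k : ℚ) * stirling2 k (p + 1) * stirling1 p j * (-1 : ℚ) ^ j *
          _root_.bernoulli (n + j - k) =
      (p : ℚ) ^ (n - 1) * ((n : ℚ) - (p : ℚ) * harmonic' p) / ((p : ℚ) + 1) +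
        ((Nat.factorial p : ℚ) / ((p : ℚ) + 1)) *
          ∑ j ∈ Finset.Icc 1 p, stirling2 n (p - j) * harmonic' j / (Nat.factorial j : ℚ) := by
  have hL : ∑ k ∈ Finset.Icc (p + 1) n, ∑ j ∈ Finset.range (p + 1),
        (Nat.choose n k : ℚ) * stirling2 k (p + 1) * stirling1 p j * (-1 : ℚ) ^ j *
          _root_.bernoulli (n + j - k) =
      L ((C ((-1 : ℚ) ^ p) * descPochhammer ℚ p) *
        (C (1 / ((p + 1).factorial : ℚ)) * (T ^ (p + 1)) (X ^ n : ℚ[X]))) := by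
    rw [lhs_poly, ← asc_poly, mul_comm, sum_mul, map_sum]
    refine sum_congr rfl fun k hk => ?_
    rw [mul_sum, map_sum]
    refine sum_congr rfl fun j _ => ?_
    have e : n + j - k = (n - k) + j := by have := (mem_Icc.1 hk).2; omega
    rw [e, mul_mul_mul_comm, ← C_mul, ← pow_add, L_C_mul_X_pow]
    ring
  have hL2 : L ((C ((-1 : ℚ) ^ p) * descPochhammer ℚ p) *
        (C (1 / ((p + 1).factorial : ℚ)) * (T ^ (p + 1)) (X ^ n : ℚ[X]))) =
      1 / ((p : ℚ) + 1) * ((-1) ^ p / (p.factorial : ℚ) *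
        L (descPochhammer ℚ p * (T ^ (p + 1)) (X ^ n))) := by
    rw [mul_mul_mul_comm, ← C_mul, ← smul_eq_C_mul, map_smul, smul_eq_mul, Nat.factorial_succ]
    push_cast
    have : (p.factorial : ℚ) ≠ 0 := by positivity
    field_simp
  rw [hL, hL2, iter_parts', op_id, E_pow_eval]
  have hd : (derivative ((X + C (p : ℚ)) ^ n)).eval 0 = n * (p : ℚ) ^ (n - 1) := by
    simp [derivative_pow]
  have hs : ∑ j ∈ range (p + 1), (p.choose j : ℚ) * harmonic' j *
        ((p - j).factorial * stirling2 n (p - j)) =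
      (p.factorial : ℚ) *
        ∑ j ∈ Finset.Icc 1 p, stirling2 n (p - j) * harmonic' j / (Nat.factorial j : ℚ) := by
    rw [mul_sum]
    symm
    apply sum_subset_zero_on_sdiff
    · intro k hk; simp at hk ⊢; omega
    · intro k hk
      have : k = 0 := by simp at hk; omega
      subst this; simp [harmonic']
    · intro j hj
      have hj := (mem_Icc.1 hj).2
      rw [← Nat.choose_mul_factorial_mul_factorial hj]
      have : (j.factorial : ℚ) ≠ 0 := by positivity
      push_cast
      field_simp
  have hp : (p : ℚ) ^ n = p ^ (n - 1) * p := by rw [← pow_succ]; congr 1; omega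
  rw [hd, hs, hp]
  have : (p : ℚ) + 1 ≠ 0 := by positivity
  field_simp
  ring

end SSB

theorem sum_stirling_bernoulli (n p : ℕ) (h : p < n) :
    ∑ k ∈ Finset.Icc (p + 1) n, ∑ j ∈ Finset.range (p + 1),
        (Nat.choose n k : ℚ) * stirling2 k (p + 1) * stirling1 p j * (-1 : ℚ) ^ j *
          bernoulli (n + j - k) =
      (p : ℚ) ^ (n - 1) * ((n : ℚ) - (p : ℚ) * harmonic' p) / ((p : ℚ) + 1) +
        ((Nat.factorial p : ℚ) / ((p : ℚ) + 1)) *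
          ∑ j ∈ Finset.Icc 1 p, stirling2 n (p - j) * harmonic' j / (Nat.factorial j : ℚ) := by
  exact SSB.main n p h
end

section
/- For every integer n ≥ 2, Σ_{k=2}^{n} C(n,k) S(k,2) B_{n+1−k} = −(n−1)/2. -/
theorem aux_eval (m : ℕ) (x : ℚ) : (Polynomial.bernoulli m).eval x =
    ∑ k ∈ Finset.range (m + 1), (Nat.choose m k : ℚ) * x ^ k * bernoulli (m - k) := by
  rw [Polynomial.bernoulli_def, Polynomial.eval_finsetSum]
  refine Finset.sum_congr rfl fun k hk => ?_
  have hk' : k ≤ m := Nat.lt_succ_iff.mp (Finset.mem_range.mp hk)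
  rw [Polynomial.eval_monomial]
  try rw [Nat.choose_symm hk']
  ring

theorem aux_F (n : ℕ) (x : ℚ) :
    ∑ k ∈ Finset.range (n + 1), (Nat.choose n k : ℚ) * x ^ k * bernoulli (n + 1 - k) =
      (Polynomial.bernoulli (n + 1)).eval x - x * (Polynomial.bernoulli n).eval x := by
  have e : ∑ k ∈ Finset.range (n + 1), (Nat.choose n k : ℚ) * x ^ k * bernoulli (n + 1 - k) =
      ∑ k ∈ Finset.range (n + 2), (Nat.choose n k : ℚ) * x ^ k * bernoulli (n + 1 - k) := by
    rw [Finset.sum_range_succ _ (n + 1)]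
    simp
  rw [e, aux_eval, aux_eval, Finset.sum_range_succ' _ (n + 1), Finset.sum_range_succ' _ (n + 1),
    Finset.mul_sum, eq_sub_iff_add_eq, add_right_comm, ← Finset.sum_add_distrib]
  congr 1
  · refine Finset.sum_congr rfl fun k _ => ?_
    rw [Nat.choose_succ_succ, Nat.add_sub_add_right]
    push_cast
    ring
  · simp

theorem aux_S (k : ℕ) : stirling2 k 2 = (2 ^ k - 2 * 1 ^ k + 0 ^ k) / 2 := by
  simp [stirling2, Finset.sum_range_succ]
  ring

theorem sum_stirling2_bernoulli_two (n : ℕ) (h : 2 ≤ n) :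
    ∑ k ∈ Finset.Icc 2 n, (Nat.choose n k : ℚ) * stirling2 k 2 * bernoulli (n + 1 - k) =
      -((n : ℚ) - 1) / 2 := by
  have e : ∑ k ∈ Finset.Icc 2 n, (Nat.choose n k : ℚ) * stirling2 k 2 * bernoulli (n + 1 - k) =
      ∑ k ∈ Finset.range (n + 1),
        (Nat.choose n k : ℚ) * stirling2 k 2 * bernoulli (n + 1 - k) := by
    refine Finset.sum_subset (fun k hk => ?_) (fun k hk hk' => ?_)
    · simp only [Finset.mem_Icc, Finset.mem_range] at *
      omega
    · simp only [Finset.mem_Icc, Finset.mem_range] at *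
      have : k = 0 ∨ k = 1 := by omega
      rcases this with rfl | rfl <;> norm_num [aux_S]
  have e2 : ∑ k ∈ Finset.range (n + 1),
        (Nat.choose n k : ℚ) * stirling2 k 2 * bernoulli (n + 1 - k) =
      ((∑ k ∈ Finset.range (n + 1), (Nat.choose n k : ℚ) * 2 ^ k * bernoulli (n + 1 - k))
      - 2 * (∑ k ∈ Finset.range (n + 1), (Nat.choose n k : ℚ) * 1 ^ k * bernoulli (n + 1 - k))
      + ∑ k ∈ Finset.range (n + 1), (Nat.choose n k : ℚ) * 0 ^ k * bernoulli (n + 1 - k)) / 2 := by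
    rw [Finset.mul_sum, ← Finset.sum_sub_distrib, ← Finset.sum_add_distrib, Finset.sum_div]
    refine Finset.sum_congr rfl fun k _ => ?_
    rw [aux_S]
    ring
  have h1 : ∀ m, 2 ≤ m → (Polynomial.bernoulli m).eval (1 : ℚ) = bernoulli m := fun m hm => by
    rw [Polynomial.bernoulli_eval_one, bernoulli_eq_bernoulli'_of_ne_one (by omega)]
  have h2 : ∀ m, 2 ≤ m → (Polynomial.bernoulli m).eval (2 : ℚ) = bernoulli m + m :=
    fun m hm => by
      have := Polynomial.bernoulli_eval_one_add m 1
      rw [h1 m hm, one_pow, mul_one] at this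
      rw [← this]
      norm_num
  rw [e, e2, aux_F, aux_F, aux_F, h1 _ h, h1 _ (by omega), h2 _ h, h2 _ (by omega),
    Polynomial.bernoulli_eval_zero]
  push_cast
  ring
end

section
/- For every integer n ≥ 3, Σ_{k=3}^{n} C(n,k) S(k,3) (B_{n+2−k} − B_{n+1−k}) = (2^{n−1}(n−3) + 2)/3. -/
open PowerSeries in
theorem aux_series (F E : PowerSeries ℚ) (hE : d⁄dX ℚ E = E) (h : F * (E - 1) = X) :
    (E - 1) ^ 3 * (d⁄dX ℚ (d⁄dX ℚ F) - d⁄dX ℚ F) = -3 * E ^ 2 + 4 * E - 1 + 2 * (E ^ 2 * X) := by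
  have h1 : d⁄dX ℚ F * (E - 1) + F * E = 1 := by
    have := congrArg (d⁄dX ℚ) h
    simp only [Derivation.leibniz, map_sub, hE, smul_eq_mul, PowerSeries.derivative_X,
      Derivation.map_one_eq_zero] at this
    linear_combination this
  have h2 : d⁄dX ℚ (d⁄dX ℚ F) * (E - 1) + 2 * (d⁄dX ℚ F * E) + F * E = 0 := by
    have := congrArg (d⁄dX ℚ) h1
    simp only [Derivation.leibniz, map_sub, map_add, hE, smul_eq_mul,
      Derivation.map_one_eq_zero] at this
    linear_combination this
  generalize d⁄dX ℚ (d⁄dX ℚ F) = F2 at *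
  generalize d⁄dX ℚ F = F1 at *
  have h3 : F1 * (E - 1) ^ 2 = (E - 1) - X * E := by
    linear_combination (E - 1) * h1 - E * h
  linear_combination (E - 1) ^ 2 * h2 - (2 * E + (E - 1)) * h3 - E * (E - 1) * h

theorem aux_stirling (k : ℕ) :
    stirling2 k 3 = (3 ^ k - 3 * 2 ^ k + 3 - 0 ^ k) / 6 := by
  simp only [stirling2, Finset.sum_range_succ, Finset.sum_range_zero]
  norm_num [Nat.factorial, Nat.choose]
  ring

open PowerSeries in
theorem aux_exp_pow (m k : ℕ) : coeff k (exp ℚ ^ m) = (m : ℚ) ^ k / k.factorial := by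
  rw [exp_pow_eq_rescale_exp, coeff_rescale, coeff_exp]
  simp [div_eq_mul_inv]

open PowerSeries in
theorem aux_stirling_coeff (k : ℕ) :
    coeff k ((exp ℚ - 1) ^ 3) = 6 * stirling2 k 3 / k.factorial := by
  have : (exp ℚ - 1) ^ 3 = exp ℚ ^ 3 - C (3 : ℚ) * exp ℚ ^ 2 + C (3 : ℚ) * exp ℚ ^ 1 - exp ℚ ^ 0 := by
    simp only [map_ofNat]
    ring
  rw [this, aux_stirling]
  simp only [map_sub, map_add, coeff_C_mul, aux_exp_pow]
  push_cast
  rw [one_pow]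
  ring

open PowerSeries in
theorem sum_stirling2_bernoulli_three (n : ℕ) (h : 3 ≤ n) :
    ∑ k ∈ Finset.Icc 3 n,
        (Nat.choose n k : ℚ) * stirling2 k 3 * (bernoulli (n + 2 - k) - bernoulli (n + 1 - k)) =
      (2 ^ (n - 1) * ((n : ℚ) - 3) + 2) / 3 := by
  have hE : d⁄dX ℚ (exp ℚ) = exp ℚ := by
    ext k
    rw [coeff_derivative, coeff_exp, coeff_exp, Nat.factorial_succ]
    simp
    field_simp
  have key := congrArg (coeff n)
    (aux_series (bernoulliPowerSeries ℚ) (exp ℚ) hE (bernoulliPowerSeries_mul_exp_sub_one ℚ))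
  have hR : -3 * exp ℚ ^ 2 + 4 * exp ℚ - 1 + 2 * (exp ℚ ^ 2 * X)
      = C (-3 : ℚ) * exp ℚ ^ 2 + C (4 : ℚ) * exp ℚ ^ 1 - exp ℚ ^ 0
        + C (2 : ℚ) * (exp ℚ ^ 2 * X) := by
    simp only [map_ofNat, map_neg]
    ring
  rw [hR, coeff_mul, Finset.Nat.sum_antidiagonal_eq_sum_range_succ_mk] at key
  obtain ⟨m, rfl⟩ : ∃ m, n = m + 1 := ⟨n - 1, by omega⟩
  simp only [map_add, map_sub, coeff_C_mul, coeff_succ_mul_X, aux_exp_pow] at key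
  have hsub : Finset.Icc 3 (m + 1) ⊆ Finset.range (m + 1).succ := by
    intro x hx
    simp at hx ⊢
    omega
  rw [Finset.sum_subset hsub]
  · have hL : ∀ k ∈ Finset.range (m + 1).succ,
        ((m + 1).choose k : ℚ) * stirling2 k 3 *
          (bernoulli (m + 1 + 2 - k) - bernoulli (m + 1 + 1 - k)) =
        ((m + 1).factorial / 6 : ℚ) * (coeff k ((exp ℚ - 1) ^ 3) *
          (coeff (m + 1 - k) (d⁄dX ℚ (d⁄dX ℚ (bernoulliPowerSeries ℚ))) -
            coeff (m + 1 - k) (d⁄dX ℚ (bernoulliPowerSeries ℚ)))) := by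
      intro k hk
      have hk' : k ≤ m + 1 := by simp at hk; omega
      obtain ⟨j, hj⟩ := Nat.exists_eq_add_of_le hk'
      rw [hj, show k + j + 2 - k = j + 2 by omega, show k + j + 1 - k = j + 1 by omega,
        show k + j - k = j by omega, Nat.choose_symm_add, Nat.add_choose, aux_stirling_coeff]
      rw [Nat.cast_div (Nat.factorial_mul_factorial_dvd_factorial_add k j) (by positivity)]
      simp only [coeff_derivative, bernoulliPowerSeries, coeff_mk, Nat.factorial_succ]
      simp
      have := Nat.factorial_ne_zero k
      have := Nat.factorial_ne_zero j
      field_simp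
      try ring
    rw [Finset.sum_congr rfl hL, ← Finset.mul_sum, key, Nat.factorial_succ]
    have := Nat.factorial_ne_zero m
    push_cast
    simp
    field_simp
    ring
  · intro k hk hk2
    have : k < 3 := by
      simp at hk hk2
      by_contra hc
      have := hk2 (by omega)
      omega
    interval_cases k <;> simp [aux_stirling] <;> norm_num
end

section
/- For every integer p ≥ 1, Σ_{j=1}^{p} S(p+1, p−j) H_j/j! = ( p! − (p+1)p^p + p^{p+1} H_p ) / p!. -/
lemma aux_pascal (n : ℕ) (f : ℕ → ℚ) :
    ∑ t ∈ Finset.range (n + 2), (-1 : ℚ) ^ t * (Nat.choose (n + 1) t : ℚ) * f t =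
      ∑ t ∈ Finset.range (n + 1), (-1 : ℚ) ^ t * (Nat.choose n t : ℚ) * (f t - f (t + 1)) := by
  have h2 : ∑ t ∈ Finset.range (n + 1), (-1 : ℚ) ^ t * (Nat.choose n t : ℚ) * f t =
      ∑ t ∈ Finset.range (n + 1), (-1 : ℚ) ^ (t + 1) * (Nat.choose n (t + 1) : ℚ) * f (t + 1)
        + f 0 := by
    have := Finset.sum_range_succ' (fun t => (-1 : ℚ) ^ t * (Nat.choose n t : ℚ) * f t) (n + 1)
    rw [Finset.sum_range_succ] at this
    simpa using this
  rw [Finset.sum_range_succ']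
  simp only [mul_sub, Finset.sum_sub_distrib]
  rw [h2]
  simp only [Nat.choose_succ_succ', Nat.cast_add, mul_add, add_mul, Finset.sum_add_distrib]
  simp [pow_succ]
  ring

lemma aux_D (n : ℕ) :
    ∑ t ∈ Finset.range (n + 1), (-1 : ℚ) ^ t * (Nat.choose n t : ℚ) * (1 / ((t : ℚ) + 1)) =
      1 / ((n : ℚ) + 1) := by
  have h := aux_pascal n (fun _ => (1 : ℚ))
  rw [Finset.sum_range_succ'] at h
  have hn : (n : ℚ) + 1 ≠ 0 := by positivity
  have : ∀ t ∈ Finset.range (n + 1),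
      (-1 : ℚ) ^ (t + 1) * (Nat.choose (n + 1) (t + 1) : ℚ) * 1 =
      -((n : ℚ) + 1) * ((-1 : ℚ) ^ t * (Nat.choose n t : ℚ) * (1 / ((t : ℚ) + 1))) := by
    intro t _
    have h1 : ((n : ℚ) + 1) * (Nat.choose n t : ℚ) =
      (Nat.choose (n + 1) (t + 1) : ℚ) * ((t : ℚ) + 1) := by
      exact_mod_cast Nat.add_one_mul_choose_eq n t
    have ht : (t : ℚ) + 1 ≠ 0 := by positivity
    field_simp
    rw [pow_succ]
    linear_combination (-1 : ℚ) ^ t * h1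
  rw [Finset.sum_congr rfl this, ← Finset.mul_sum] at h
  simp only [sub_self, mul_zero, Finset.sum_const_zero, pow_zero, Nat.choose_zero_right,
    Nat.cast_one, mul_one] at h
  rw [eq_div_iff hn]
  linarith

lemma aux_harm_succ (n : ℕ) : harmonic' (n + 1) = harmonic' n + 1 / ((n : ℚ) + 1) := by
  unfold harmonic'
  rw [Finset.sum_Icc_succ_top (by omega)]
  push_cast
  rfl

lemma aux_A (n : ℕ) :
    ∑ t ∈ Finset.range (n + 1), (-1 : ℚ) ^ t * (Nat.choose n t : ℚ) * (1 / (t : ℚ)) =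
      - harmonic' n := by
  induction n with
  | zero => simp [harmonic']
  | succ n ih =>
    rw [aux_pascal n (fun t => 1 / (t : ℚ)), aux_harm_succ]
    simp only [mul_sub, Finset.sum_sub_distrib]
    rw [ih]
    have := aux_D n
    push_cast
    rw [this]
    ring

lemma aux_B (n : ℕ) :
    ∑ t ∈ Finset.range (n + 1), (-1 : ℚ) ^ t * (Nat.choose n t : ℚ) * harmonic' t =
      - (1 / (n : ℚ)) := by
  cases n with
  | zero => simp [harmonic']
  | succ n =>
    rw [aux_pascal n harmonic']
    have := aux_D n
    push_cast
    rw [← this, ← Finset.sum_neg_distrib]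
    refine Finset.sum_congr rfl fun t _ => ?_
    rw [aux_harm_succ]
    ring

lemma aux_pow (p a : ℕ) (ha : a ≤ p) :
    ∑ i ∈ Finset.range (p + 1), (-1 : ℚ) ^ (p - i) * (Nat.choose p i : ℚ) * (i : ℚ) ^ a =
      if a = p then (Nat.factorial p : ℚ) else 0 := by
  have h := fwdDiff_iter_eq_sum_shift (1 : ℚ) (fun x : ℚ => x ^ a) p 0
  have e : ∑ i ∈ Finset.range (p + 1), (-1 : ℚ) ^ (p - i) * (Nat.choose p i : ℚ) * (i : ℚ) ^ a =
      (fwdDiff (1 : ℚ))^[p] (fun x : ℚ => x ^ a) 0 := by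
    rw [h]
    refine Finset.sum_congr rfl fun t _ => ?_
    simp
  rw [e]
  split_ifs with hap
  · subst hap
    rw [fwdDiff_iter_eq_factorial]
    simp
  · rw [fwdDiff_iter_pow_eq_zero_of_lt (by omega)]
    simp

lemma aux_key (p : ℕ) :
    ∑ i ∈ Finset.range (p + 1), (-1 : ℚ) ^ (p - i) * (Nat.choose p i : ℚ) *
        ((i : ℚ) ^ (p + 1) * (1 / ((p - i : ℕ) : ℚ))) =
      - ((Nat.factorial p : ℚ) - ((p : ℚ) + 1) * (p : ℚ) ^ p
        + (p : ℚ) ^ (p + 1) * harmonic' p) := by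
  have hA : ∑ i ∈ Finset.range (p + 1), (-1 : ℚ) ^ (p - i) * (Nat.choose p i : ℚ) *
      (1 / ((p - i : ℕ) : ℚ)) = - harmonic' p := by
    rw [← aux_A p, ← Finset.sum_range_reflect]
    refine Finset.sum_congr rfl fun t ht => ?_
    have ht' : t ≤ p := by simpa [Nat.lt_succ_iff] using ht
    have h1 : p + 1 - 1 - t = p - t := by omega
    have h2 : p - (p - t) = t := by omega
    rw [h1, h2, Nat.choose_symm ht']
  have hG : ∑ i ∈ Finset.range (p + 1), (-1 : ℚ) ^ (p - i) * (Nat.choose p i : ℚ) *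
      (∑ a ∈ Finset.range (p + 1), (i : ℚ) ^ a * (p : ℚ) ^ (p - a)) = (Nat.factorial p : ℚ) := by
    simp only [Finset.mul_sum]
    rw [Finset.sum_comm]
    have : ∀ a ∈ Finset.range (p + 1),
        ∑ i ∈ Finset.range (p + 1), (-1 : ℚ) ^ (p - i) * (Nat.choose p i : ℚ) *
          ((i : ℚ) ^ a * (p : ℚ) ^ (p - a)) =
        if a = p then (Nat.factorial p : ℚ) else 0 := by
      intro a ha
      have ha' : a ≤ p := by simpa [Nat.lt_succ_iff] using ha
      simp only [← mul_assoc]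
      rw [← Finset.sum_mul, aux_pow p a ha']
      split_ifs with h
      · simp [h]
      · simp
    rw [Finset.sum_congr rfl this]
    simp
  have hE : ∀ i ∈ Finset.range (p + 1), (-1 : ℚ) ^ (p - i) * (Nat.choose p i : ℚ) *
        ((i : ℚ) ^ (p + 1) * (1 / ((p - i : ℕ) : ℚ))) =
      (p : ℚ) ^ (p + 1) * ((-1 : ℚ) ^ (p - i) * (Nat.choose p i : ℚ) * (1 / ((p - i : ℕ) : ℚ)))
      - (-1 : ℚ) ^ (p - i) * (Nat.choose p i : ℚ) *
        (∑ a ∈ Finset.range (p + 1), (i : ℚ) ^ a * (p : ℚ) ^ (p - a))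
      + if i = p then ((p : ℚ) + 1) * (p : ℚ) ^ p else 0 := by
    intro i hi
    have hi' : i ≤ p := by simpa [Nat.lt_succ_iff] using hi
    split_ifs with h
    · subst h
      have : ∑ a ∈ Finset.range (i + 1), (i : ℚ) ^ a * (i : ℚ) ^ (i - a) =
          ((i : ℚ) + 1) * (i : ℚ) ^ i := by
        rw [Finset.sum_congr rfl (g := fun _ => (i : ℚ) ^ i)]
        · simp
        · intro a ha
          rw [← pow_add]
          congr 1
          have := Finset.mem_range.1 ha
          omega
      rw [this]
      simp
    · have hg := (Commute.all (i : ℚ) (p : ℚ)).geom_sum₂_mul (p + 1)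
      simp only [Nat.add_sub_cancel] at hg
      rw [Nat.cast_sub hi']
      have hne : (p : ℚ) - i ≠ 0 := by
        rw [sub_ne_zero]
        exact_mod_cast Ne.symm h
      field_simp
      linear_combination -((-1 : ℚ) ^ (p - i) * (Nat.choose p i : ℚ)) * hg
  rw [Finset.sum_congr rfl hE, Finset.sum_add_distrib, Finset.sum_sub_distrib, ← Finset.mul_sum,
    hA, hG]
  simp
  ring

theorem sum_harmonic_stirling2 (p : ℕ) (hp : 1 ≤ p) :
    ∑ j ∈ Finset.Icc 1 p, stirling2 (p + 1) (p - j) * harmonic' j / (Nat.factorial j : ℚ) =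
      ((Nat.factorial p : ℚ) - ((p : ℚ) + 1) * (p : ℚ) ^ p + (p : ℚ) ^ (p + 1) * harmonic' p) /
        (Nat.factorial p : ℚ) := by
  have hpf : (Nat.factorial p : ℚ) ≠ 0 := by exact_mod_cast Nat.factorial_ne_zero p
  have h0 : ∑ j ∈ Finset.Icc 1 p,
      stirling2 (p + 1) (p - j) * harmonic' j / (Nat.factorial j : ℚ) =
      ∑ j ∈ Finset.range (p + 1),
      stirling2 (p + 1) (p - j) * harmonic' j / (Nat.factorial j : ℚ) := by
    apply Finset.sum_subset
    · intro j hj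
      simp only [Finset.mem_Icc, Finset.mem_range] at *
      omega
    · intro j hj hj'
      simp only [Finset.mem_Icc, Finset.mem_range] at *
      have : j = 0 := by omega
      subst this
      simp [harmonic']
  rw [h0, eq_div_iff hpf, Finset.sum_mul]
  have h1 : ∀ j ∈ Finset.range (p + 1),
      stirling2 (p + 1) (p - j) * harmonic' j / (Nat.factorial j : ℚ) * (Nat.factorial p : ℚ) =
      ∑ i ∈ Finset.range (p + 1), (Nat.choose p i : ℚ) * (i : ℚ) ^ (p + 1) *
        ((-1 : ℚ) ^ (p - i - j) * (Nat.choose (p - i) j : ℚ) * harmonic' j) := by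
    intro j hj
    have hj' : j ≤ p := by simpa [Nat.lt_succ_iff] using hj
    have hext : ∑ i ∈ Finset.range (p - j + 1),
        (-1 : ℚ) ^ (p - j - i) * (Nat.choose (p - j) i : ℚ) * (i : ℚ) ^ (p + 1) =
        ∑ i ∈ Finset.range (p + 1),
        (-1 : ℚ) ^ (p - j - i) * (Nat.choose (p - j) i : ℚ) * (i : ℚ) ^ (p + 1) := by
      apply Finset.sum_subset
      · intro i hi
        simp only [Finset.mem_range] at *
        omega
      · intro i _ hi
        simp only [Finset.mem_range] at hi
        rw [Nat.choose_eq_zero_of_lt (by omega)]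
        simp
    unfold stirling2
    rw [hext]
    have hc : (Nat.factorial p : ℚ) = (Nat.choose p j : ℚ) * (Nat.factorial j : ℚ) *
        (Nat.factorial (p - j) : ℚ) := by
      exact_mod_cast (Nat.choose_mul_factorial_mul_factorial hj').symm
    have hf1 : (Nat.factorial j : ℚ) ≠ 0 := by exact_mod_cast Nat.factorial_ne_zero _
    have hf2 : (Nat.factorial (p - j) : ℚ) ≠ 0 := by exact_mod_cast Nat.factorial_ne_zero _
    have hs : ∀ S : ℚ, 1 / (Nat.factorial (p - j) : ℚ) * S * harmonic' j / (Nat.factorial j : ℚ) *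
        (Nat.factorial p : ℚ) = (Nat.choose p j : ℚ) * harmonic' j * S := by
      intro S
      rw [hc]
      field_simp
    rw [hs, Finset.mul_sum]
    refine Finset.sum_congr rfl fun i hi => ?_
    have hi' : i ≤ p := by simpa [Nat.lt_succ_iff] using hi
    have hch : (Nat.choose p j : ℚ) * (Nat.choose (p - j) i : ℚ) =
        (Nat.choose p i : ℚ) * (Nat.choose (p - i) j : ℚ) := by
      by_cases hij : i + j ≤ p
      · have a1 := Nat.choose_mul (n := p) (k := i + j) (s := j) (by omega)
        have a2 := Nat.choose_mul (n := p) (k := i + j) (s := i) (by omega)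
        rw [Nat.add_sub_cancel] at a1
        rw [Nat.add_sub_cancel_left, Nat.choose_symm_add] at a2
        exact_mod_cast a1.symm.trans a2
      · rw [Nat.choose_eq_zero_of_lt (show p - j < i by omega),
          Nat.choose_eq_zero_of_lt (show p - i < j by omega)]
        simp
    rw [show p - j - i = p - i - j by omega]
    linear_combination harmonic' j * (-1 : ℚ) ^ (p - i - j) * (i : ℚ) ^ (p + 1) * hch
  rw [Finset.sum_congr rfl h1, Finset.sum_comm]
  rw [← neg_eq_iff_eq_neg.2 (aux_key p), ← Finset.sum_neg_distrib]
  refine Finset.sum_congr rfl fun i hi => ?_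
  have hi' : i ≤ p := by simpa [Nat.lt_succ_iff] using hi
  rw [← Finset.mul_sum]
  have h2 : ∑ j ∈ Finset.range (p + 1),
      (-1 : ℚ) ^ (p - i - j) * (Nat.choose (p - i) j : ℚ) * harmonic' j =
      (-1 : ℚ) ^ (p - i) * - (1 / ((p - i : ℕ) : ℚ)) := by
    rw [← aux_B, Finset.mul_sum]
    symm
    have : ∀ j ∈ Finset.range (p - i + 1),
        (-1 : ℚ) ^ (p - i) * ((-1 : ℚ) ^ j * (Nat.choose (p - i) j : ℚ) * harmonic' j) =
        (-1 : ℚ) ^ (p - i - j) * (Nat.choose (p - i) j : ℚ) * harmonic' j := by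
      intro j hj
      have hj' : j ≤ p - i := by simpa [Nat.lt_succ_iff] using hj
      obtain ⟨m, hm⟩ := Nat.exists_eq_add_of_le hj'
      rw [hm, Nat.add_sub_cancel_left, pow_add]
      have : (-1 : ℚ) ^ j * (-1 : ℚ) ^ j = 1 := by
        rw [← mul_pow]
        simp
      linear_combination (-1 : ℚ) ^ m * (Nat.choose (j + m) j : ℚ) * harmonic' j * this
    rw [Finset.sum_congr rfl this]
    apply Finset.sum_subset
    · intro j hj
      simp only [Finset.mem_range] at *
      omega
    · intro j _ hj
      simp only [Finset.mem_range] at hj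
      rw [Nat.choose_eq_zero_of_lt (by omega)]
      simp
  rw [h2]
  ring
end

section
/- For all integers n ≥ 0 and p ≥ 0, B_{n,p} = ((p+1)/p!) Σ_{j=0}^{p} (-1)^j c(p,j) B_{n+j}, where B_m denotes the m-th Bernoulli number. -/
open Polynomial in
/-- The Bernoulli umbral functional sending `X ^ m` to `B_m`. -/
noncomputable def umbL : ℚ[X] →ₗ[ℚ] ℚ :=
  Polynomial.lsum (fun i => LinearMap.mulRight ℚ (_root_.bernoulli i))

open Polynomial in
lemma umbL_C_mul_X_pow (a : ℚ) (m : ℕ) : umbL (C a * X ^ m) = a * _root_.bernoulli m := by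
  rw [C_mul_X_pow_eq_monomial]
  simp [umbL, Polynomial.lsum_apply, sum_monomial_index]

open Polynomial in
lemma umbL_X_pow (m : ℕ) : umbL (X ^ m) = _root_.bernoulli m := by
  simpa using umbL_C_mul_X_pow 1 m

open Polynomial in
lemma umbL_C_mul (a : ℚ) (f : ℚ[X]) : umbL (C a * f) = a * umbL f := by
  rw [← smul_eq_C_mul, map_smul, smul_eq_mul]

open Polynomial in
lemma umbL_shift (f : ℚ[X]) : umbL (f.comp (X + 1)) - umbL f = f.coeff 1 := by
  induction f using Polynomial.induction_on' with
  | add p q hp hq => simp only [add_comp, map_add, coeff_add, ← hp, ← hq]; ring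
  | monomial m a =>
    rw [← C_mul_X_pow_eq_monomial, mul_comp, C_comp, umbL_C_mul, umbL_C_mul, X_pow_comp,
      umbL_X_pow, add_pow, map_sum, Finset.sum_range_succ, ← mul_sub, coeff_C_mul, coeff_X_pow]
    have h : ∀ i, umbL (X ^ i * 1 ^ (m - i) * (m.choose i : ℚ[X])) =
        (m.choose i : ℚ) * _root_.bernoulli i := by
      intro i
      rw [one_pow, mul_one, mul_comm, ← C_eq_natCast, umbL_C_mul_X_pow]
    simp only [h, _root_.sum_bernoulli]
    simp [eq_comm]

open Polynomial in
lemma desc_eval_neg_one (k : ℕ) :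
    (descPochhammer ℚ k).eval (-1) = (-1) ^ k * (k.factorial : ℚ) := by
  induction k with
  | zero => simp
  | succ k ih =>
    rw [descPochhammer_succ_right, eval_mul, ih, Nat.factorial_succ]
    simp
    ring

open Polynomial in
lemma umbL_desc (k : ℕ) :
    umbL (descPochhammer ℚ k) = (-1) ^ k * (k.factorial : ℚ) / (k + 1) := by
  have h := umbL_shift (descPochhammer ℚ (k + 1))
  rw [← map_sub] at h
  have h1 : (descPochhammer ℚ (k + 1)).comp (X + 1) - descPochhammer ℚ (k + 1)
      = C ((k : ℚ) + 1) * descPochhammer ℚ k := by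
    conv_lhs => rw [descPochhammer_succ_right ℚ k, ← descPochhammer_succ_right ℚ k]
    nth_rewrite 1 [descPochhammer_succ_left]
    rw [descPochhammer_succ_right, mul_comp, comp_assoc]
    simp
    ring
  have h2 : (descPochhammer ℚ (k + 1)).coeff 1 = (-1) ^ k * (k.factorial : ℚ) := by
    rw [descPochhammer_succ_left, coeff_X_mul, coeff_zero_eq_eval_zero, eval_comp,
      ← desc_eval_neg_one]
    simp
  rw [h1, h2, umbL_C_mul] at h
  have : (k : ℚ) + 1 ≠ 0 := by positivity
  field_simp
  linarith

open Polynomial in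
lemma umbL_desc_mul (p : ℕ) : ∀ k : ℕ,
    umbL (descPochhammer ℚ k * descPochhammer ℚ p) =
      (-1) ^ (k + p) * (k.factorial : ℚ) ^ 2 * (p.factorial : ℚ) ^ 2 /
        ((k + p + 1).factorial : ℚ) := by
  induction p with
  | zero =>
    intro k
    simp only [descPochhammer_zero, mul_one, umbL_desc, add_zero, Nat.factorial_succ]
    have : (k.factorial : ℚ) ≠ 0 := by positivity
    push_cast
    field_simp
    simp
  | succ p ih =>
    intro k
    have h : descPochhammer ℚ k * descPochhammer ℚ (p + 1) =
        descPochhammer ℚ (k + 1) * descPochhammer ℚ p +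
          C ((k : ℚ) - p) * (descPochhammer ℚ k * descPochhammer ℚ p) := by
      rw [descPochhammer_succ_right, descPochhammer_succ_right]
      simp
      ring
    rw [h, map_add, umbL_C_mul, ih, ih]
    have e1 : k + 1 + p + 1 = (k + p + 1) + 1 := by ring
    have e2 : k + (p + 1) + 1 = (k + p + 1) + 1 := by ring
    rw [e1, e2, Nat.factorial_succ (k + p + 1), Nat.factorial_succ k, Nat.factorial_succ p]
    have : ((k + p + 1).factorial : ℚ) ≠ 0 := by positivity
    push_cast
    field_simp
    ring

/-- `k! S(n,k)`. -/
def surjT (n k : ℕ) : ℚ :=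
  ∑ j ∈ Finset.range (k + 1), (-1 : ℚ) ^ (k - j) * (Nat.choose k j : ℚ) * (j : ℚ) ^ n

lemma surjT_zero_succ (k : ℕ) : surjT 0 (k + 1) = 0 := by
  have h := add_pow (1 : ℚ) (-1) (k + 1)
  simp only [one_pow, one_mul, add_neg_cancel] at h
  simp only [surjT, pow_zero, mul_one]
  rw [← h]; simp

lemma surjT_succ_zero (n : ℕ) : surjT (n + 1) 0 = 0 := by
  simp [surjT]

lemma surjT_aux (n k : ℕ) : surjT n (k + 1) + surjT n k =
    ∑ j ∈ Finset.range (k + 1), (-1 : ℚ) ^ (k - j) * (Nat.choose k j : ℚ) * ((j + 1 : ℕ) : ℚ) ^ n := by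
  have e : surjT n k = - ∑ j ∈ Finset.range (k + 2),
      (-1 : ℚ) ^ (k + 1 - j) * (Nat.choose k j : ℚ) * (j : ℚ) ^ n := by
    rw [Finset.sum_range_succ]
    simp only [Nat.choose_succ_self, surjT, Nat.cast_zero, mul_zero, zero_mul, add_zero]
    rw [← Finset.sum_neg_distrib]
    refine Finset.sum_congr rfl fun j hj => ?_
    have : k + 1 - j = (k - j) + 1 := by have := Finset.mem_range.1 hj; omega
    rw [this, pow_succ]; ring
  rw [e, surjT, ← sub_eq_add_neg, ← Finset.sum_sub_distrib, Finset.sum_range_succ']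
  simp only [Nat.choose_zero_right, sub_self, add_zero]
  refine Finset.sum_congr rfl fun j hj => ?_
  rw [Nat.choose_succ_succ, Nat.add_sub_add_right]
  push_cast; ring

lemma surjT_rec (n k : ℕ) :
    surjT (n + 1) (k + 1) = (k + 1) * (surjT n (k + 1) + surjT n k) := by
  rw [surjT_aux, surjT, Finset.sum_range_succ', Finset.mul_sum]
  simp only [Nat.cast_zero, ne_eq, Nat.add_eq_zero_iff, one_ne_zero, and_false, not_false_eq_true,
    zero_pow, mul_zero, add_zero]
  refine Finset.sum_congr rfl fun j hj => ?_
  have h : ((k : ℚ) + 1) * (k.choose j : ℚ) = ((k + 1).choose (j + 1) : ℚ) * ((j : ℚ) + 1) := by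
    exact_mod_cast Nat.add_one_mul_choose_eq k j
  rw [Nat.add_sub_add_right, pow_succ]
  push_cast
  linear_combination (-(-1 : ℚ) ^ (k - j) * ((j : ℚ) + 1) ^ n) * h

lemma stirling2_eq (n k : ℕ) : stirling2 n k = surjT n k / k.factorial := by
  rw [stirling2, surjT]; ring

lemma stirling2_rec (n k : ℕ) :
    stirling2 (n + 1) (k + 1) = (k + 1) * stirling2 n (k + 1) + stirling2 n k := by
  simp only [stirling2_eq, surjT_rec, Nat.factorial_succ]
  have : (k.factorial : ℚ) ≠ 0 := by positivity
  push_cast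
  field_simp

lemma stirling2_succ_zero (n : ℕ) : stirling2 (n + 1) 0 = 0 := by
  simp [stirling2_eq, surjT_succ_zero]

lemma stirling2_lt (n : ℕ) : ∀ k, n < k → stirling2 n k = 0 := by
  induction n with
  | zero =>
    rintro (_ | k) h
    · omega
    · simp [stirling2_eq, surjT_zero_succ]
  | succ n ih =>
    rintro (_ | k) h
    · omega
    · rw [stirling2_rec, ih _ (by omega), ih _ (by omega)]; simp

open Polynomial in
lemma X_pow_eq_sum_desc (n : ℕ) : (X : ℚ[X]) ^ n =
    ∑ k ∈ Finset.range (n + 1), C (stirling2 n k) * descPochhammer ℚ k := by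
  induction n with
  | zero => simp [stirling2]
  | succ n ih =>
    rw [Finset.sum_range_succ', stirling2_succ_zero, pow_succ, ih, Finset.sum_mul]
    simp only [stirling2_rec, C_0, zero_mul, add_zero]
    have h : ∑ k ∈ Finset.range (n + 1),
        C (((k : ℚ) + 1) * stirling2 n (k + 1)) * descPochhammer ℚ (k + 1) =
        ∑ k ∈ Finset.range (n + 1), C ((k : ℚ) * stirling2 n k) * descPochhammer ℚ k := by
      have h2 := Finset.sum_range_succ'
        (fun k : ℕ => C ((k : ℚ) * stirling2 n k) * descPochhammer ℚ k) (n + 1)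
      rw [Finset.sum_range_succ, stirling2_lt n (n + 1) (by omega)] at h2
      simpa using h2.symm
    simp only [C_add, add_mul, Finset.sum_add_distrib] at h ⊢
    rw [h, ← Finset.sum_add_distrib]
    refine Finset.sum_congr rfl fun k _ => ?_
    rw [descPochhammer_succ_right]
    simp
    ring

open Polynomial in
lemma asc_comp_neg (p : ℕ) :
    (ascPochhammer ℚ p).comp (-X) = (-1) ^ p * descPochhammer ℚ p := by
  induction p with
  | zero => simp
  | succ p ih =>
    rw [ascPochhammer_succ_right, descPochhammer_succ_right, mul_comp, ih]
    simp
    ring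

open Polynomial in
lemma sum_stirling1 (n p : ℕ) :
    ∑ j ∈ Finset.range (p + 1), (-1 : ℚ) ^ j * stirling1 p j * _root_.bernoulli (n + j) =
      (-1) ^ p * umbL (X ^ n * descPochhammer ℚ p) := by
  have h : (-1) ^ p * (X ^ n * descPochhammer ℚ p) =
      ∑ j ∈ Finset.range (p + 1), C ((-1 : ℚ) ^ j * stirling1 p j) * X ^ (n + j) := by
    have h1 : (ascPochhammer ℚ p).comp (-X) =
        ∑ j ∈ Finset.range (p + 1), C (stirling1 p j) * (-X) ^ j := by
      rw [comp, eval₂_eq_sum_range, ascPochhammer_natDegree]; rfl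
    rw [asc_comp_neg] at h1
    rw [mul_left_comm, h1, Finset.mul_sum]
    refine Finset.sum_congr rfl fun j _ => ?_
    rw [neg_pow (X : ℚ[X]) j]
    simp
    ring
  have h3 : (-1 : ℚ[X]) ^ p = C ((-1 : ℚ) ^ p) := by simp
  rw [← umbL_C_mul, ← h3, h, map_sum]
  simp only [umbL_C_mul_X_pow]

theorem pBernoulli_eq_sum_bernoulli (n p : ℕ) :
    pBernoulli n p =
      (((p : ℚ) + 1) / (Nat.factorial p : ℚ)) *
        ∑ j ∈ Finset.range (p + 1), (-1 : ℚ) ^ j * stirling1 p j * bernoulli (n + j) := by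
  rw [sum_stirling1, X_pow_eq_sum_desc, Finset.sum_mul, map_sum, Finset.mul_sum, Finset.mul_sum,
    pBernoulli]
  refine Finset.sum_congr rfl fun k _ => ?_
  rw [mul_assoc (Polynomial.C _), umbL_C_mul, umbL_desc_mul]
  have hc : ((Nat.choose (k + p + 1) k : ℕ) : ℚ) =
      ((k + p + 1).factorial : ℚ) / (k.factorial * (p + 1).factorial) := by
    rw [Nat.cast_choose ℚ (by omega : k ≤ k + p + 1)]
    congr 4
    omega
  rw [hc, inv_div, Nat.factorial_succ p, pow_add]
  have h1 : ((k + p + 1).factorial : ℚ) ≠ 0 := by positivity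
  have h2 : (p.factorial : ℚ) ≠ 0 := by positivity
  have h3 : ((-1 : ℚ) ^ p) * (-1) ^ p = 1 := by rw [← mul_pow]; simp
  push_cast
  field_simp
  linear_combination (-(stirling2 n k)) * h3
end

section
/- For all integers n ≥ 0 and p ≥ 0, the p-Bernoulli numbers satisfy the recurrence B_{n+1,p} = p·B_{n,p} − ((p+1)^2/(p+2))·B_{n,p+1}. -/
/-- `k!` times the Stirling number. -/
def sA (n k : ℕ) : ℚ :=
  ∑ j ∈ Finset.range (k + 1), (-1 : ℚ) ^ (k - j) * (Nat.choose k j : ℚ) * (j : ℚ) ^ n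

theorem sA_rec (n k : ℕ) : sA (n + 1) (k + 1) = ((k : ℚ) + 1) * (sA n (k + 1) + sA n k) := by
  have h1 : sA (n + 1) (k + 1) = ((k : ℚ) + 1) *
      ∑ j ∈ Finset.range (k + 1), (-1 : ℚ) ^ (k - j) * (Nat.choose k j : ℚ) * ((j : ℚ) + 1) ^ n := by
    unfold sA
    rw [Finset.sum_range_succ', Finset.mul_sum]
    simp only [Nat.add_sub_add_right, Nat.cast_add, Nat.cast_one, Nat.cast_zero,
      ne_eq, Nat.succ_ne_zero, not_false_eq_true, zero_pow, mul_zero, add_zero]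
    refine Finset.sum_congr rfl fun j _ => ?_
    have h : ((k : ℚ) + 1) * (Nat.choose k j : ℚ) = (Nat.choose (k + 1) (j + 1) : ℚ) * (j + 1) := by
      exact_mod_cast Nat.add_one_mul_choose_eq k j
    rw [pow_succ]
    linear_combination (-(-1 : ℚ) ^ (k - j) * ((j : ℚ) + 1) ^ n) * h
  have h2 : sA n k = - ∑ j ∈ Finset.range (k + 1 + 1),
      (-1 : ℚ) ^ (k + 1 - j) * (Nat.choose k j : ℚ) * (j : ℚ) ^ n := by
    rw [Finset.sum_range_succ, Nat.choose_succ_self]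
    unfold sA
    simp only [Nat.cast_zero, mul_zero, zero_mul, add_zero]
    rw [← Finset.sum_neg_distrib]
    refine Finset.sum_congr rfl fun j hj => ?_
    have : k + 1 - j = (k - j) + 1 := by
      have := Finset.mem_range.1 hj
      omega
    rw [this, pow_succ]
    ring
  rw [h1, h2]
  congr 1
  unfold sA
  rw [← sub_eq_add_neg, ← Finset.sum_sub_distrib, Finset.sum_range_succ' _ (k + 1)]
  simp only [Nat.choose_zero_right, sub_self, add_zero, Nat.add_sub_add_right]
  refine Finset.sum_congr rfl fun j _ => ?_
  rw [Nat.choose_succ_succ]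
  push_cast
  ring

theorem sA_zero (n : ℕ) : sA (n + 1) 0 = 0 := by simp [sA]

theorem sA_lt (n : ℕ) : ∀ k, n < k → sA n k = 0 := by
  induction n with
  | zero =>
    intro k hk
    have h := add_pow (1 : ℚ) (-1) k
    rw [add_neg_cancel, zero_pow (by omega)] at h
    rw [h]
    simp [sA]
  | succ n ih =>
    intro k hk
    obtain ⟨k, rfl⟩ : ∃ m, k = m + 1 := ⟨k - 1, by omega⟩
    rw [sA_rec, ih _ (by omega), ih _ (by omega)]
    simp

theorem pB_eq (n p : ℕ) : pBernoulli n p = ∑ k ∈ Finset.range (n + 1),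
    (-1 : ℚ) ^ k * sA n k * ((Nat.choose (k + p + 1) k : ℚ))⁻¹ := by
  unfold pBernoulli
  refine Finset.sum_congr rfl fun k _ => ?_
  have : (Nat.factorial k : ℚ) ≠ 0 := by exact_mod_cast Nat.factorial_ne_zero k
  have h : stirling2 n k = (1 / (Nat.factorial k : ℚ)) * sA n k := rfl
  rw [h]
  field_simp

theorem w_eq (k p : ℕ) : ((Nat.choose (k + p + 1) k : ℚ))⁻¹ =
    (Nat.factorial k : ℚ) * (Nat.factorial (p + 1) : ℚ) / (Nat.factorial (k + p + 1) : ℚ) := by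
  rw [add_assoc, Nat.cast_add_choose, inv_div]

theorem w_rec (k p : ℕ) :
    (k : ℚ) * ((Nat.choose (k + p + 1) k : ℚ))⁻¹
      - ((k : ℚ) + 1) * ((Nat.choose (k + 1 + p + 1) (k + 1) : ℚ))⁻¹ =
    (p : ℚ) * ((Nat.choose (k + p + 1) k : ℚ))⁻¹
      - (((p : ℚ) + 1) ^ 2 / ((p : ℚ) + 2)) * ((Nat.choose (k + (p + 1) + 1) k : ℚ))⁻¹ := by
  rw [w_eq, w_eq, w_eq, show k + 1 + p + 1 = (k + p + 1) + 1 by ring,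
    show k + (p + 1) + 1 = (k + p + 1) + 1 by ring, Nat.factorial_succ (k + p + 1),
    Nat.factorial_succ k, Nat.factorial_succ (p + 1)]
  have h0 : (Nat.factorial (k + p + 1) : ℚ) ≠ 0 := by exact_mod_cast Nat.factorial_ne_zero _
  have h1 : (p : ℚ) + 2 ≠ 0 := by positivity
  have h2 : (k : ℚ) + p + 1 + 1 ≠ 0 := by positivity
  have h3 : (p : ℚ) + 1 + 1 = p + 2 := by ring
  push_cast
  rw [h3]
  field_simp
  ring

theorem pBernoulli_recurrence (n p : ℕ) :
    pBernoulli (n + 1) p =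
      (p : ℚ) * pBernoulli n p - (((p : ℚ) + 1) ^ 2 / ((p : ℚ) + 2)) * pBernoulli n (p + 1) := by
  have hR : (p : ℚ) * pBernoulli n p
      - (((p : ℚ) + 1) ^ 2 / ((p : ℚ) + 2)) * pBernoulli n (p + 1)
      = ∑ k ∈ Finset.range (n + 1), ((-1 : ℚ) ^ k * sA n k *
        ((k : ℚ) * ((Nat.choose (k + p + 1) k : ℚ))⁻¹)
        - (-1 : ℚ) ^ k * sA n k *
          (((k : ℚ) + 1) * ((Nat.choose (k + 1 + p + 1) (k + 1) : ℚ))⁻¹)) := by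
    rw [pB_eq, pB_eq, Finset.mul_sum, Finset.mul_sum, ← Finset.sum_sub_distrib]
    refine Finset.sum_congr rfl fun k _ => ?_
    rw [← mul_sub, w_rec]
    ring
  have hS : ∑ k ∈ Finset.range (n + 1), (-1 : ℚ) ^ k * sA n k *
        ((k : ℚ) * ((Nat.choose (k + p + 1) k : ℚ))⁻¹)
      = ∑ k ∈ Finset.range (n + 1), (-1 : ℚ) ^ (k + 1) * sA n (k + 1) *
        (((k : ℚ) + 1) * ((Nat.choose (k + 1 + p + 1) (k + 1) : ℚ))⁻¹) := by
    have h := Finset.sum_range_succ (fun k : ℕ => (-1 : ℚ) ^ k * sA n k *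
        ((k : ℚ) * ((Nat.choose (k + p + 1) k : ℚ))⁻¹)) (n + 1)
    rw [Finset.sum_range_succ', sA_lt n (n + 1) (by omega)] at h
    simp only [Nat.cast_zero, zero_mul, mul_zero, add_zero, Nat.cast_add, Nat.cast_one] at h
    exact h.symm
  rw [hR, Finset.sum_sub_distrib, hS, ← Finset.sum_sub_distrib, pB_eq, Finset.sum_range_succ',
    sA_zero]
  simp only [mul_zero, zero_mul, add_zero]
  refine Finset.sum_congr rfl fun k _ => ?_
  rw [sA_rec]
  ring
end
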